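/- arXiv:1901.11517 — 2 statements merged into one kernel-verified Lean document; each statement's English description precedes it below -/
import Mathlib

section
/- Let Ω = (0,1)×(−1,1). Then A∥ = {u ∈ BV(Ω;ℝ²) : ∇u = R(I + γ e₁⊗e₂) with a constant R ∈ SO(2) and γ ∈ L¹(Ω) with ∂₁γ = 0, and D^s u = (ϱ⊗e₂)|D^s u| for some ϱ ∈ L¹_{|D^s u|}(Ω;ℝ²) with |ϱ| = 1 and ϱ parallel to Re₁ for |D^s u|-a.e. point of Ω}. -/
open MeasureTheory Set Filter Topology
open scoped ENNReal

noncomputable section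

/-- We identify `ℝ²` with maps `Fin 2 → ℝ`; `x 0` is the `x₁` coordinate and
`x 1` the `x₂` coordinate. -/
abbrev V2 := Fin 2 → ℝ

/-- `2 × 2` real matrices. -/
abbrev Mat2 := Matrix (Fin 2) (Fin 2) ℝ

/-- Proper rotations: `SO(2) = {R : R Rᵀ = 1, det R = 1}`. -/
def SO2 : Set Mat2 := {R | R * R.transpose = 1 ∧ R.det = 1}

def e1 : V2 := ![1, 0]
def e2 : V2 := ![0, 1]

/-- Euclidean norm on `ℝ²`. -/
def vnorm (v : V2) : ℝ := Real.sqrt (v 0 ^ 2 + v 1 ^ 2)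

/-- Frobenius norm on `2 × 2` matrices. -/
def mnorm (M : Mat2) : ℝ := Real.sqrt (∑ i, ∑ j, M i j ^ 2)

/-- Euclidean inner product on `ℝ²`. -/
def dot (v w : V2) : ℝ := ∑ i, v i * w i

/-- Tensor (outer) product `a ⊗ b = a bᵀ` of two vectors. -/
def outer (a b : V2) : Mat2 := Matrix.of fun i j => a i * b j

/-- Identification of `ℝ²` with the Euclidean space `EuclideanSpace ℝ (Fin 2)`. -/
def vToE (v : V2) : EuclideanSpace ℝ (Fin 2) := (EuclideanSpace.equiv (Fin 2) ℝ).symm v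

/-- Identification of `2×2` matrices with `EuclideanSpace ℝ (Fin 2 × Fin 2)`
(so that the induced norm is the Frobenius norm). -/
def mToE (M : Mat2) : EuclideanSpace ℝ (Fin 2 × Fin 2) :=
  (EuclideanSpace.equiv (Fin 2 × Fin 2) ℝ).symm fun p => M p.1 p.2

/-- A vector-valued function of one real variable has bounded variation on `s`
(with respect to the Euclidean norm). -/
def BVv (ψ : ℝ → V2) (s : Set ℝ) : Prop := BoundedVariationOn (fun t => vToE (ψ t)) s

/-- A matrix-valued function of one real variable has bounded variation on `s`
(with respect to the Frobenius norm). -/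
def BVm (R : ℝ → Mat2) (s : Set ℝ) : Prop := BoundedVariationOn (fun t => mToE (R t)) s

/-- Componentwise (a.e. pointwise) derivative of a vector-valued function of one variable.
For a one-dimensional `BV` function, the classical derivative exists a.e. and coincides with
the density of the absolutely continuous part of its distributional derivative
(the approximate derivative). -/
def vecDeriv (ψ : ℝ → V2) (t : ℝ) : V2 := fun i => deriv (fun s => ψ s i) t

/-- Componentwise derivative of a matrix-valued function of one variable. -/
def mDeriv (R : ℝ → Mat2) (t : ℝ) : Mat2 := Matrix.of fun i j => deriv (fun s => R s i j) t

/-- The rigid layers `ε Y_rig = {x : Int.fract (x₂/ε) ∈ [λ, 1)}` (1-periodic extension of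
`[0,1) × [λ,1)`, scaled by `ε`). -/
def rigid2 (lam ε : ℝ) : Set V2 := {x | lam ≤ Int.fract (x 1 / ε)}

/-- The one-dimensional rigid layers `ε I_rig`, where `I_rig` is the 1-periodic extension
of `[λ, 1)`. -/
def rigid1 (lam ε : ℝ) : Set ℝ := {t | lam ≤ Int.fract (t / ε)}

/-- `a_Ω = inf_{x ∈ Ω} x₂`. -/
def aOm (Ω : Set V2) : ℝ := sInf ((fun x : V2 => x 1) '' Ω)

/-- `b_Ω = sup_{x ∈ Ω} x₂`. -/
def bOm (Ω : Set V2) : ℝ := sSup ((fun x : V2 => x 1) '' Ω)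

/-- `Ω` is `x₁`-connected: every horizontal slice is a (possibly empty) interval. -/
def X1Connected (Ω : Set V2) : Prop := ∀ t : ℝ, OrdConnected {s : ℝ | ![s, t] ∈ Ω}

/-- A (nonempty) bounded Lipschitz domain: near every boundary point, after a rotation,
`Ω` is the region above the graph of a Lipschitz function. -/
def IsLipschitzDomain (Ω : Set V2) : Prop :=
  IsOpen Ω ∧ Ω.Nonempty ∧ Bornology.IsBounded Ω ∧
    ∀ x ∈ frontier Ω, ∃ Q ∈ SO2, ∃ L : NNReal, ∃ f : ℝ → ℝ, ∃ r : ℝ, 0 < r ∧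
      LipschitzWith L f ∧ ∀ y ∈ Metric.ball x r, (y ∈ Ω ↔ f (Q.mulVec y 0) < Q.mulVec y 1)

/-- Partial derivative `∂_j φ` of a scalar test function. -/
def pd (j : Fin 2) (φ : V2 → ℝ) (x : V2) : ℝ := fderiv ℝ φ x (Pi.single j 1)

/-- Componentwise integrability of a matrix-valued map. -/
def IntegrableOnM (g : V2 → Mat2) (Ω : Set V2) : Prop :=
  ∀ i j, IntegrableOn (fun x => g x i j) Ω volume

/-- `u ∈ W^{1,1}(Ω;ℝ²)` with weak gradient `gu`, expressed through integration by parts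
against smooth compactly supported test functions. -/
structure IsSobolev11On (Ω : Set V2) (u : V2 → V2) (gu : V2 → Mat2) : Prop where
  int_u : IntegrableOn u Ω volume
  int_gu : IntegrableOnM gu Ω
  ibp : ∀ φ : V2 → ℝ, ContDiff ℝ (⊤ : ℕ∞) φ → HasCompactSupport φ → tsupport φ ⊆ Ω →
    ∀ i j, ∫ x in Ω, u x i * pd j φ x = - ∫ x in Ω, φ x * gu x i j

/-- `u ∈ BV(Ω;ℝ²)`, with distributional derivative `Du = gu · L² + gs · σ`.
Here `gu` is the approximate differential (density of the absolutely continuous part),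
`σ = |D^s u|` is the total variation measure of the singular part (a finite measure,
concentrated on `Ω` and singular with respect to Lebesgue measure), and `gs` is the
polar density of the singular part, of unit Frobenius norm `σ`-a.e. -/
structure HasBVDerivOn (Ω : Set V2) (u : V2 → V2) (gu : V2 → Mat2)
    (σ : Measure V2) (gs : V2 → Mat2) : Prop where
  int_u : IntegrableOn u Ω volume
  int_gu : IntegrableOnM gu Ω
  fin : σ Set.univ ≠ ⊤
  conc : σ Ωᶜ = 0
  perp : σ ⟂ₘ (volume : Measure V2)
  meas_gs : ∀ i j, AEMeasurable (fun x => gs x i j) σ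
  unit : ∀ᵐ x ∂σ, mnorm (gs x) = 1
  ibp : ∀ φ : V2 → ℝ, ContDiff ℝ (⊤ : ℕ∞) φ → HasCompactSupport φ → tsupport φ ⊆ Ω →
    ∀ i j, ∫ x in Ω, u x i * pd j φ x
        = (- ∫ x in Ω, φ x * gu x i j) - ∫ x, φ x * gs x i j ∂σ

/-- `L¹(Ω;ℝ²)` convergence of a sequence. -/
def L1ConvOn (Ω : Set V2) (un : ℕ → V2 → V2) (u : V2 → V2) : Prop :=
  Tendsto (fun n => ∫ x in Ω, vnorm (un n x - u x)) atTop (𝓝 0)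

/-- Weak* convergence of the measures `gn n · L²∟Ω` to `gu · L²∟Ω + gs · σ`
in `M(Ω; ℝ^{2×2})`, tested against continuous functions compactly supported in `Ω`. -/
def MeasConv (Ω : Set V2) (gn : ℕ → V2 → Mat2) (gu : V2 → Mat2)
    (σ : Measure V2) (gs : V2 → Mat2) : Prop :=
  ∀ φ : V2 → ℝ, Continuous φ → HasCompactSupport φ → tsupport φ ⊆ Ω → ∀ i j,
    Tendsto (fun n => ∫ x in Ω, φ x * gn n x i j) atTop
      (𝓝 ((∫ x in Ω, φ x * gu x i j) + ∫ x, φ x * gs x i j ∂σ))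

/-- Weak* convergence in `BV(Ω;ℝ²)` of a sequence of `W^{1,1}` maps to a `BV` limit:
`L¹` convergence together with weak* convergence of the derivative measures. -/
def WeakStarToBV (Ω : Set V2) (un : ℕ → V2 → V2) (u : V2 → V2) : Prop :=
  ∃ gu σ gs, HasBVDerivOn Ω u gu σ gs ∧ L1ConvOn Ω un u ∧
    ∀ gn : ℕ → V2 → Mat2, (∀ n, IsSobolev11On Ω (un n) (gn n)) → MeasConv Ω gn gu σ gs

/-- `u ∈ A_ε`, witnessed by the data `R ∈ L^∞(Ω;SO(2))` and `γ ∈ L¹(Ω)`: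
`u ∈ W^{1,1}(Ω;ℝ²)` with `∇u = R (I + γ e₁⊗e₂)` a.e. and `γ = 0` a.e. on `εY_rig ∩ Ω`. -/
structure MemAeps (Ω : Set V2) (lam ε : ℝ) (u : V2 → V2)
    (R : V2 → Mat2) (γ : V2 → ℝ) : Prop where
  so2 : ∀ᵐ x ∂(volume.restrict Ω), R x ∈ SO2
  int_γ : IntegrableOn γ Ω volume
  sob : IsSobolev11On Ω u fun x => R x * (1 + γ x • outer e1 e2)
  rig : ∀ᵐ x ∂(volume.restrict (Ω ∩ rigid2 lam ε)), γ x = 0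

/-- The elastoplastic energy `E_ε(u) = ∫_Ω |γ| dx` for `u ∈ A_ε`, `∞` otherwise,
as an `ℝ≥0∞`-valued functional (the decomposition data is essentially unique). -/
def Eeps (Ω : Set V2) (lam ε : ℝ) (u : V2 → V2) : ℝ≥0∞ :=
  sInf {c | ∃ R γ, MemAeps Ω lam ε u R γ ∧ c = ∫⁻ x in Ω, ENNReal.ofReal |γ x|}

/-- `u ∈ A` relative to the vertical interval `(a, b)`:
`u ∈ BV(Ω;ℝ²)` with `u(x) = R(x₂)x + ψ(x₂)` a.e., `R ∈ BV(a,b;SO(2))`,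
`ψ ∈ BV(a,b;ℝ²)` and `det ∇u = 1` a.e. in `Ω`. -/
def memAOn (Ω : Set V2) (a b : ℝ) (u : V2 → V2) : Prop :=
  ∃ gu σ gs, HasBVDerivOn Ω u gu σ gs ∧
    (∃ R : ℝ → Mat2, ∃ ψ : ℝ → V2, (∀ t ∈ Ioo a b, R t ∈ SO2) ∧
      BVm R (Ioo a b) ∧ BVv ψ (Ioo a b) ∧
      ∀ᵐ x ∂(volume.restrict Ω), u x = (R (x 1)).mulVec x + ψ (x 1)) ∧
    ∀ᵐ x ∂(volume.restrict Ω), (gu x).det = 1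

/-- `u ∈ A`. -/
def memA (Ω : Set V2) (u : V2 → V2) : Prop := memAOn Ω (aOm Ω) (bOm Ω) u

/-- `u ∈ A∥` relative to the vertical interval `(a,b)`:
`u(x) = Rx + ϑ(x₂) R e₁ + c` a.e. with a constant rotation `R ∈ SO(2)`,
`ϑ ∈ BV(a,b)` and `c ∈ ℝ²`. -/
def memAparOn (Ω : Set V2) (a b : ℝ) (u : V2 → V2) : Prop :=
  ∃ R ∈ SO2, ∃ ϑ : ℝ → ℝ, ∃ c : V2, BoundedVariationOn ϑ (Ioo a b) ∧
    ∀ᵐ x ∂(volume.restrict Ω), u x = R.mulVec x + ϑ (x 1) • R.mulVec e1 + c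

/-- `u ∈ A∥`. -/
def memApar (Ω : Set V2) (u : V2 → V2) : Prop := memAparOn Ω (aOm Ω) (bOm Ω) u

/-- The limit energy `E(u) = ∫_Ω |ψ'·Re₁| dx + |D^s u|(Ω)` for `u ∈ A`, `∞` otherwise. -/
def Efun (Ω : Set V2) (u : V2 → V2) : ℝ≥0∞ :=
  sInf {c | ∃ gu σ gs, HasBVDerivOn Ω u gu σ gs ∧
    ∃ R : ℝ → Mat2, ∃ ψ : ℝ → V2,
      (∀ t ∈ Ioo (aOm Ω) (bOm Ω), R t ∈ SO2) ∧ BVm R (Ioo (aOm Ω) (bOm Ω)) ∧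
      BVv ψ (Ioo (aOm Ω) (bOm Ω)) ∧
      (∀ᵐ x ∂(volume.restrict Ω), u x = (R (x 1)).mulVec x + ψ (x 1)) ∧
      (∀ᵐ x ∂(volume.restrict Ω), (gu x).det = 1) ∧
      c = (∫⁻ x in Ω, ENNReal.ofReal |dot (vecDeriv ψ (x 1)) ((R (x 1)).mulVec e1)|)
          + σ Set.univ}

/-- The limit energy on `A∥`: `E(u) = ∫_Ω |ϑ'(x₂)| dx + |D^s u|(Ω)` for `u ∈ A∥`,
`∞` otherwise. -/
def EparFun (Ω : Set V2) (u : V2 → V2) : ℝ≥0∞ :=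
  sInf {c | ∃ gu σ gs, HasBVDerivOn Ω u gu σ gs ∧
    ∃ R ∈ SO2, ∃ ϑ : ℝ → ℝ, ∃ c0 : V2, BoundedVariationOn ϑ (Ioo (aOm Ω) (bOm Ω)) ∧
      (∀ᵐ x ∂(volume.restrict Ω), u x = R.mulVec x + ϑ (x 1) • R.mulVec e1 + c0) ∧
      c = (∫⁻ x in Ω, ENNReal.ofReal |deriv ϑ (x 1)|) + σ Set.univ}

/-- The regularized limit energy `E^δ(u) = ∫_Ω |ϑ'| dx + |D^s u|(Ω) + δ|Ω|` on `A∥`,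
`∞` otherwise. -/
def EDelta (Ω : Set V2) (δ : ℝ) (u : V2 → V2) : ℝ≥0∞ :=
  EparFun Ω u + ENNReal.ofReal δ * volume Ω

/-- `‖v‖_{W^{1,p}(Ω;ℝ²)}^p = ∫_Ω |v|^p + ∫_Ω |Dv|^p` for a map `v` with weak Jacobian `G`. -/
def Wp1 (p : ℝ) (Ω : Set V2) (v : V2 → V2) (G : V2 → Mat2) : ℝ≥0∞ :=
  (∫⁻ x in Ω, ENNReal.ofReal (vnorm (v x) ^ p)) + ∫⁻ x in Ω, ENNReal.ofReal (mnorm (G x) ^ p)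

/-- The regularized energy
`E^δ_ε(u) = ∫_Ω |γ| dx + δ ‖∂₁ u‖_{W^{1,p}(Ω;ℝ²)}^p` for `u ∈ A_ε` with
`∂₁u = R e₁ ∈ W^{1,p}(Ω;ℝ²)`, and `∞` otherwise. -/
def EepsDelta (Ω : Set V2) (lam ε δ p : ℝ) (u : V2 → V2) : ℝ≥0∞ :=
  sInf {c | ∃ R γ, MemAeps Ω lam ε u R γ ∧
    ∃ G : V2 → Mat2, IsSobolev11On Ω (fun x => (R x).mulVec e1) G ∧
      c = (∫⁻ x in Ω, ENNReal.ofReal |γ x|) +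
          ENNReal.ofReal δ * Wp1 p Ω (fun x => (R x).mulVec e1) G}

/-- `x` is an approximate jump point of `u`, with one-sided approximate limits `a ≠ b`
relative to a unit normal `ν`. -/
def JumpPt (u : V2 → V2) (x : V2) : Prop :=
  ∃ a b ν : V2, a ≠ b ∧ vnorm ν = 1 ∧
    Tendsto (fun r : ℝ =>
        (∫⁻ z in {z | z ∈ Metric.ball x r ∧ 0 < dot (z - x) ν},
            ENNReal.ofReal (vnorm (u z - a))) / volume (Metric.ball x r))
      (𝓝[>] 0) (𝓝 0) ∧
    Tendsto (fun r : ℝ =>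
        (∫⁻ z in {z | z ∈ Metric.ball x r ∧ dot (z - x) ν < 0},
            ENNReal.ofReal (vnorm (u z - b))) / volume (Metric.ball x r))
      (𝓝[>] 0) (𝓝 0)

/-- The jump set `J_u` of `u` in `Ω`. -/
def jumpSet (Ω : Set V2) (u : V2 → V2) : Set V2 := {x ∈ Ω | JumpPt u x}

/-- `u ∈ SBV_∞(Ω;ℝ²)`: `u ∈ BV` with singular part concentrated on the jump set
(no Cantor part), `∇u ∈ L^∞(Ω;ℝ^{2×2})` and `H¹(J_u) < ∞`. -/
def memSBVinf (Ω : Set V2) (u : V2 → V2) : Prop :=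
  ∃ gu σ gs, HasBVDerivOn Ω u gu σ gs ∧
    σ {x | ¬ JumpPt u x} = 0 ∧
    (∃ M : ℝ, ∀ᵐ x ∂(volume.restrict Ω), mnorm (gu x) ≤ M) ∧
    Measure.hausdorffMeasure (1 : ℝ) (jumpSet Ω u) ≠ ⊤

/-- Piecewise constant functions on `(a,b)` with finitely many jumps
(the class `PC(a,b)`). -/
def PCOn {α : Type*} (a b : ℝ) (f : ℝ → α) : Prop :=
  ∃ S : Finset ℝ, ∀ s₁ ∈ Ioo a b, ∀ s₂ ∈ Ioo a b, s₁ ≤ s₂ →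
    (∀ r ∈ S, r ∉ Icc s₁ s₂) → f s₁ = f s₂

/-- Piecewise Lipschitz functions on `(a,b)` with finitely many jump points:
the class `SBV_∞(a,b;ℝ²)` of one-dimensional special functions of bounded variation
with bounded derivative and finitely many jumps. -/
def PLipOn (a b : ℝ) (f : ℝ → V2) : Prop :=
  ∃ S : Finset ℝ, ∃ L : ℝ, 0 ≤ L ∧ ∀ s₁ ∈ Ioo a b, ∀ s₂ ∈ Ioo a b, s₁ ≤ s₂ →
    (∀ r ∈ S, r ∉ Icc s₁ s₂) → vnorm (f s₂ - f s₁) ≤ L * (s₂ - s₁)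

/-- The rectangle `Ω = (0,1) × (−1,1)`. -/
def Rect : Set V2 := {x | x 0 ∈ Ioo (0:ℝ) 1 ∧ x 1 ∈ Ioo (-1:ℝ) 1}

/-- `f ∈ W^{1,1}(a,b)`: `f` has an integrable weak derivative on `(a,b)`
(absolutely continuous representative). -/
def IsW11On (f : ℝ → ℝ) (a b : ℝ) : Prop :=
  ∃ g : ℝ → ℝ, IntegrableOn g (Ioo a b) volume ∧
    ∀ s ∈ Ioo a b, ∀ t ∈ Ioo a b, f t - f s = ∫ r in s..t, g r

/-- Smooth test functions on an interval. -/
structure Tst (α β : ℝ) (p : ℝ → ℝ) : Prop where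
  smooth : ContDiff ℝ (⊤ : ℕ∞) p
  cpt : HasCompactSupport p
  supp : tsupport p ⊆ Ioo α β

theorem Tst.zero_of_notMem {α β : ℝ} {p : ℝ → ℝ} (hp : Tst α β p) {x : ℝ} (hx : x ∉ Ioo α β) :
    p x = 0 := image_eq_zero_of_notMem_tsupport (fun h => hx (hp.supp h))

theorem Tst.integrable {α β : ℝ} {p : ℝ → ℝ} (hp : Tst α β p) : Integrable p :=
  hp.smooth.continuous.integrable_of_hasCompactSupport hp.cpt

theorem Tst.deriv {α β : ℝ} {p : ℝ → ℝ} (hp : Tst α β p) : Tst α β (deriv p) where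
  smooth := by
    have := hp.smooth
    exact ((contDiff_infty_iff_deriv).1 this).2
  cpt := hp.cpt.deriv
  supp := (closure_minimal support_deriv_subset (isClosed_tsupport p)).trans hp.supp

theorem Tst.setIntegral {α β : ℝ} {p : ℝ → ℝ} (hp : Tst α β p) (g : ℝ → ℝ) :
    ∫ x in Ioo α β, g x * p x = ∫ x, g x * p x := by
  apply setIntegral_eq_integral_of_forall_compl_eq_zero
  intro x hx
  rw [hp.zero_of_notMem hx, mul_zero]

theorem Tst.bdd {α β : ℝ} {p : ℝ → ℝ} (hp : Tst α β p) : ∃ C, ∀ x, ‖p x‖ ≤ C :=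
  hp.cpt.exists_bound_of_continuous hp.smooth.continuous

theorem Tst.antideriv {α β : ℝ} (hαβ : α < β) {p : ℝ → ℝ} (hp : Tst α β p) (h0 : ∫ x, p x = 0) :
    ∃ P, Tst α β P ∧ ∀ x, _root_.deriv P x = p x := by
  have hcont := hp.smooth.continuous
  obtain ⟨c, d, hc, hd, hcd⟩ : ∃ c d, α < c ∧ d < β ∧ tsupport p ⊆ Icc c d := by
    rcases (tsupport p).eq_empty_or_nonempty with h | h
    · obtain ⟨m, hm⟩ := exists_between hαβ
      exact ⟨m, m, hm.1, hm.2, by simp [h]⟩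
    · have hK : IsCompact (tsupport p) := hp.cpt
      obtain ⟨c, hc, hc'⟩ := hK.exists_isLeast h
      obtain ⟨d, hd, hd'⟩ := hK.exists_isGreatest h
      exact ⟨c, d, (hp.supp hc).1, (hp.supp hd).2, fun x hx => ⟨hc' hx, hd' hx⟩⟩
  have hz : ∀ x, x ∉ Icc c d → p x = 0 := fun x hx =>
    image_eq_zero_of_notMem_tsupport (fun h => hx (hcd h))
  have hder : ∀ x, HasDerivAt (fun x => ∫ t in α..x, p t) (p x) x := fun x =>
    intervalIntegral.integral_hasDerivAt_right (hcont.intervalIntegrable _ _)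
      (hcont.stronglyMeasurableAtFilter _ _) hcont.continuousAt
  have hsupp : tsupport (fun x => ∫ t in α..x, p t) ⊆ Icc c d := by
    apply closure_minimal _ isClosed_Icc
    intro x hx
    by_contra hxc
    apply hx
    by_cases hxc' : x < c
    · apply intervalIntegral.integral_zero_ae
      refine Eventually.of_forall fun t ht => hz t fun h => ?_
      rw [mem_uIoc] at ht
      rcases ht with ht | ht <;> linarith [h.1, ht.1, ht.2]
    · have hdx : d < x := by
        by_contra h
        exact hxc ⟨not_lt.1 hxc', not_lt.1 h⟩
      by_cases hax : α ≤ x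
      · show ∫ t in α..x, p t = 0
        rw [intervalIntegral.integral_of_le hax, ← h0]
        apply setIntegral_eq_integral_of_forall_compl_eq_zero
        intro t ht
        apply hz
        intro h
        exact ht ⟨by linarith [h.1], by linarith [h.2]⟩
      · have : ∀ t, p t = 0 := fun t => hz t fun h => by linarith [h.1, h.2, not_lt.1 hxc']
        simp [this]
  refine ⟨fun x => ∫ t in α..x, p t, ⟨?_, ?_, ?_⟩, fun x => (hder x).deriv⟩
  · have hh : _root_.deriv (fun x => ∫ t in α..x, p t) = p := funext fun x => (hder x).deriv
    rw [contDiff_infty_iff_deriv, hh]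
    exact ⟨fun x => (hder x).differentiableAt, hp.smooth⟩
  · exact isCompact_Icc.of_isClosed_subset (isClosed_tsupport _) hsupp
  · exact fun x hx => ⟨hc.trans_le (hsupp hx).1, (hsupp hx).2.trans_lt hd⟩

theorem exists_Tst {α β : ℝ} (hαβ : α < β) : ∃ a, Tst α β a ∧ ∫ x, a x = 1 := by
  let f : ContDiffBump ((α + β) / 2) := ⟨(β - α) / 8, (β - α) / 4, by linarith, by linarith⟩
  refine ⟨f.normed volume, ⟨f.contDiff_normed, f.hasCompactSupport_normed, ?_⟩, f.integral_normed⟩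
  rw [f.tsupport_normed_eq, Real.closedBall_eq_Icc]
  intro x hx
  have h1 := hx.1
  have h2 := hx.2
  change (α + β) / 2 - (β - α) / 4 ≤ x at h1
  change x ≤ (α + β) / 2 + (β - α) / 4 at h2
  exact ⟨by linarith, by linarith⟩

theorem Tst.sub_smul {α β : ℝ} {p a : ℝ → ℝ} (hp : Tst α β p) (ha : Tst α β a) (c : ℝ) :
    Tst α β (fun x => p x - c * a x) where
  smooth := hp.smooth.sub (contDiff_const.mul ha.smooth)
  cpt := by
    have := hp.cpt.sub (ha.cpt.mul_left (f := fun _ => c))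
    exact this
  supp := by
    have h1 : tsupport (fun x => p x - c * a x) ⊆ tsupport p ∪ tsupport a := by
      apply closure_minimal _ ((isClosed_tsupport p).union (isClosed_tsupport a))
      intro x hx
      by_contra h
      apply hx
      simp only [mem_union, not_or] at h
      show p x - c * a x = 0
      rw [image_eq_zero_of_notMem_tsupport h.1, image_eq_zero_of_notMem_tsupport h.2]
      simp
    exact h1.trans (union_subset hp.supp ha.supp)

theorem Tst.decomp {α β : ℝ} (hαβ : α < β) {p a : ℝ → ℝ} (hp : Tst α β p) (ha : Tst α β a)
    (ha1 : ∫ x, a x = 1) :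
    ∃ P, Tst α β P ∧ ∀ x, p x = (∫ y, p y) * a x + _root_.deriv P x := by
  obtain ⟨P, hP, hP'⟩ := (hp.sub_smul ha (∫ y, p y)).antideriv hαβ (by
    rw [integral_sub hp.integrable (ha.integrable.const_mul _), integral_const_mul, ha1]; simp)
  exact ⟨P, hP, fun x => by rw [hP']; ring⟩

theorem Tst.int_mul {α β : ℝ} {p g : ℝ → ℝ} {μ : Measure ℝ} (hp : Tst α β p)
    (hg : Integrable g μ) : Integrable (fun x => g x * p x) μ := by
  obtain ⟨C, hC⟩ := hp.bdd
  exact hg.mul_bdd hp.smooth.continuous.aestronglyMeasurable (ae_of_all _ hC)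

theorem ae_zero_of_Tst {α β : ℝ} {g : ℝ → ℝ} (hg : IntegrableOn g (Ioo α β))
    (h : ∀ b, Tst α β b → ∫ x in Ioo α β, g x * b x = 0) :
    ∀ᵐ x ∂(volume.restrict (Ioo α β)), g x = 0 := by
  rw [ae_restrict_iff' measurableSet_Ioo]
  apply isOpen_Ioo.ae_eq_zero_of_integral_contDiff_smul_eq_zero hg.locallyIntegrableOn
  intro b hb1 hb2 hb3
  have hb : Tst α β b := ⟨hb1, hb2, hb3⟩
  have := h b hb
  rw [hb.setIntegral] at this
  simpa [mul_comm] using this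

theorem const_of_Tst {α β : ℝ} (hαβ : α < β) {g : ℝ → ℝ} (hg : IntegrableOn g (Ioo α β))
    (h : ∀ b, Tst α β b → ∫ x in Ioo α β, g x * deriv b x = 0) :
    ∃ c, ∀ᵐ x ∂(volume.restrict (Ioo α β)), g x = c := by
  obtain ⟨a, ha, ha1⟩ := exists_Tst hαβ
  refine ⟨∫ x in Ioo α β, g x * a x, ?_⟩
  set c := ∫ x in Ioo α β, g x * a x with hc
  have key : ∀ᵐ x ∂(volume.restrict (Ioo α β)), g x - c = 0 := by
    apply ae_zero_of_Tst (hg.sub (integrable_const c))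
    intro b hb
    obtain ⟨P, hP, hP'⟩ := hb.decomp hαβ ha ha1
    have e1 : ∫ x in Ioo α β, g x * b x = (∫ y, b y) * c := by
      have : ∀ x, g x * b x = (∫ y, b y) * (g x * a x) + g x * deriv P x := fun x => by
        rw [hP' x]; ring
      simp_rw [this]
      rw [integral_add ((ha.int_mul hg).const_mul _) (hP.deriv.int_mul hg), h P hP,
        integral_const_mul]
      simp [hc]
    have e2 : ∫ x in Ioo α β, b x = ∫ x, b x := by
      simpa using hb.setIntegral (fun _ => 1)
    show ∫ x in Ioo α β, (g x - c) * b x = 0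
    simp_rw [sub_mul]
    rw [integral_sub (hb.int_mul hg) (hb.integrable.integrableOn.const_mul c), e1,
      integral_const_mul, e2]
    ring
  filter_upwards [key] with x hx
  linarith

/-- Fubini for cumulative functions. -/
theorem cumul_ibp {X : Type*} [MeasurableSpace X] {μ : Measure X} [SFinite μ] {k : X → ℝ}
    (hk : Integrable k μ) {g : X → ℝ} (hg : Measurable g) {b : ℝ → ℝ} (hb : ContDiff ℝ 1 b)
    (hbc : HasCompactSupport b) :
    ∫ t, (∫ x in {x | g x ≤ t}, k x ∂μ) * deriv b t = - ∫ x, k x * b (g x) ∂μ := by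
  have hbi : Integrable (deriv b) :=
    (hb.continuous_deriv le_rfl).integrable_of_hasCompactSupport hbc.deriv
  have hm : MeasurableSet {z : ℝ × X | g z.2 ≤ z.1} :=
    measurableSet_le (hg.comp measurable_snd) measurable_fst
  have hms : ∀ t, MeasurableSet {x | g x ≤ t} := fun t => measurableSet_le hg measurable_const
  have hInteg : Integrable (indicator {z : ℝ × X | g z.2 ≤ z.1}
      (fun z => deriv b z.1 * k z.2)) (volume.prod μ) := (hbi.mul_prod hk).indicator hm
  calc ∫ t, (∫ x in {x | g x ≤ t}, k x ∂μ) * deriv b t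
      = ∫ t, ∫ x, indicator {z : ℝ × X | g z.2 ≤ z.1} (fun z => deriv b z.1 * k z.2) (t, x) ∂μ := by
        congr 1; ext t
        rw [mul_comm, ← integral_const_mul, ← integral_indicator (hms t)]
        rfl
    _ = ∫ x, (∫ t, indicator {z : ℝ × X | g z.2 ≤ z.1}
          (fun z => deriv b z.1 * k z.2) (t, x)) ∂μ :=
        integral_integral_swap (f := fun t x => indicator {z : ℝ × X | g z.2 ≤ z.1}
          (fun z => deriv b z.1 * k z.2) (t, x)) hInteg
    _ = ∫ x, - (k x * b (g x)) ∂μ := by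
        congr 1; ext x
        have : (fun t => indicator {z : ℝ × X | g z.2 ≤ z.1} (fun z => deriv b z.1 * k z.2) (t, x))
            = indicator (Ici (g x)) (fun t => deriv b t * k x) := by
          ext t; rfl
        rw [this, integral_indicator measurableSet_Ici, integral_mul_const,
          integral_Ici_eq_integral_Ioi, hbc.integral_Ioi_deriv_eq hb]
        ring
    _ = _ := integral_neg _

theorem cumul_mono {X : Type*} [MeasurableSpace X] {μ : Measure X} {k : X → ℝ}
    (hk : Integrable k μ) (h0 : ∀ x, 0 ≤ k x) (g : X → ℝ)  :
    Monotone (fun t => ∫ x in {x | g x ≤ t}, k x ∂μ) := by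
  intro s t hst
  apply setIntegral_mono_set hk.integrableOn (ae_of_all _ h0)
  exact LE.le.eventuallyLE (fun x (hx : g x ≤ s) => le_trans hx hst)

theorem BV_sub_mono {f g : ℝ → ℝ} (hf : Monotone f) (hg : Monotone g) (α β : ℝ) :
    BoundedVariationOn (fun t => f t - g t) (Icc α β) := by
  rcases le_or_gt α β with h | h
  · have hf' : BoundedVariationOn f (Icc α β) := by
      have := (hf.monotoneOn (Icc α β)).locallyBoundedVariationOn α β
        (left_mem_Icc.2 h) (right_mem_Icc.2 h)
      simpa using this
    have hg' : BoundedVariationOn g (Icc α β) := by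
      have := (hg.monotoneOn (Icc α β)).locallyBoundedVariationOn α β
        (left_mem_Icc.2 h) (right_mem_Icc.2 h)
      simpa using this
    unfold BoundedVariationOn at *
    refine ne_top_of_le_ne_top (ENNReal.add_ne_top.2 ⟨hf', hg'⟩) ?_
    apply iSup_le
    intro p
    calc _ ≤ ∑ i ∈ Finset.range p.1, (edist (f (p.2.1 (i+1))) (f (p.2.1 i)) +
            edist (g (p.2.1 (i+1))) (g (p.2.1 i))) := by
          apply Finset.sum_le_sum
          intro i _
          rw [edist_dist, edist_dist, edist_dist, ← ENNReal.ofReal_add dist_nonneg dist_nonneg]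
          exact ENNReal.ofReal_le_ofReal (dist_sub_sub_le _ _ _ _)
      _ ≤ _ := by
          rw [Finset.sum_add_distrib]
          exact add_le_add (eVariationOn.sum_le p.2.2.1 p.2.2.2)
            (eVariationOn.sum_le p.2.2.1 p.2.2.2)
  · rw [Icc_eq_empty (not_le.2 h)]
    exact BoundedVariationOn.of_subsingleton (by simp)

theorem cumul_diff {X : Type*} [MeasurableSpace X] {μ : Measure X} {k : X → ℝ}
    (hk : Integrable k μ) (g : X → ℝ)  : ∃ f1 f2 : ℝ → ℝ, Monotone f1 ∧ Monotone f2 ∧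
    ∀ t, ∫ x in {x | g x ≤ t}, k x ∂μ = f1 t - f2 t := by
  refine ⟨_, _, cumul_mono hk.pos_part (fun x => le_max_right _ _) g,
    cumul_mono hk.neg_part (fun x => le_max_right _ _) g, fun t => ?_⟩
  show _ = (∫ x in {x | g x ≤ t}, max (k x) 0 ∂μ) - ∫ x in {x | g x ≤ t}, max (-k x) 0 ∂μ
  rw [← integral_sub hk.pos_part.integrableOn hk.neg_part.integrableOn]
  congr 1; ext x
  rcases le_total (k x) 0 with h | h <;> simp [h]

theorem ae_zero_of_rect {X Y : Type*} [MeasurableSpace X] [MeasurableSpace Y] {μ : Measure X}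
    {ν : Measure Y} [SFinite μ] [SFinite ν] {f : X × Y → ℝ} (hf : Integrable f (μ.prod ν))
    (h : ∀ A B, MeasurableSet A → MeasurableSet B → ∫ z in A ×ˢ B, f z ∂(μ.prod ν) = 0) :
    ∀ᵐ z ∂(μ.prod ν), f z = 0 := by
  have key : ∀ S, MeasurableSet S → ∫ z in S, f z ∂(μ.prod ν) = 0 := by
    intro S hS
    induction S, hS using MeasurableSpace.induction_on_inter generateFrom_prod.symm isPiSystem_prod with
    | empty => simp
    | basic t ht =>
      obtain ⟨A, hA, B, hB, rfl⟩ := ht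
      exact h A B hA hB
    | compl t ht iht =>
      have := integral_add_compl ht hf
      have huniv := h univ univ MeasurableSet.univ MeasurableSet.univ
      simp only [univ_prod_univ, Measure.restrict_univ] at huniv
      linarith
    | iUnion s hd hm ih =>
      rw [integral_iUnion hm hd hf.integrableOn]
      simp [ih]
  exact hf.ae_eq_zero_of_forall_setIntegral_eq_zero (fun s hs _ => key s hs)

theorem Tst.int_mul2 {X : Type*} [MeasurableSpace X] {α β γ δ : ℝ} {p q : ℝ → ℝ} {μ : Measure X}
    (hp : Tst α β p) (hq : Tst γ δ q) {f g1 g2 : X → ℝ} (hf : Integrable f μ)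
    (hg1 : Measurable g1) (hg2 : Measurable g2) :
    Integrable (fun x => f x * (p (g1 x) * q (g2 x))) μ := by
  obtain ⟨C, hC⟩ := hp.bdd
  obtain ⟨D, hD⟩ := hq.bdd
  refine hf.mul_bdd (c := C * D) ?_ (ae_of_all _ fun x => ?_)
  · exact ((hp.smooth.continuous.measurable.comp hg1).mul
      (hq.smooth.continuous.measurable.comp hg2)).aestronglyMeasurable
  · rw [norm_mul]
    exact mul_le_mul (hC _) (hD _) (norm_nonneg _) ((norm_nonneg _).trans (hC 0))

theorem Tst.int_comp {X : Type*} [MeasurableSpace X] {γ δ : ℝ} {q : ℝ → ℝ} {μ : Measure X}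
    (hq : Tst γ δ q) {f g2 : X → ℝ} (hf : Integrable f μ) (hg2 : Measurable g2) :
    Integrable (fun x => f x * q (g2 x)) μ := by
  obtain ⟨D, hD⟩ := hq.bdd
  exact hf.mul_bdd (c := D) (hq.smooth.continuous.measurable.comp hg2).aestronglyMeasurable
    (ae_of_all _ fun x => hD _)

theorem ae_zero_of_tensor {α β γ δ : ℝ} {f : ℝ × ℝ → ℝ}
    (hf : Integrable f ((volume.restrict (Ioo α β)).prod (volume.restrict (Ioo γ δ))))
    (h : ∀ p q, Tst α β p → Tst γ δ q →
      ∫ z, f z * (p z.1 * q z.2) ∂((volume.restrict (Ioo α β)).prod (volume.restrict (Ioo γ δ))) = 0) :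
    ∀ᵐ z ∂((volume.restrict (Ioo α β)).prod (volume.restrict (Ioo γ δ))), f z = 0 := by
  set μ := (volume.restrict (Ioo α β))
  set ν := (volume.restrict (Ioo γ δ))
  have hG : ∀ q, Tst γ δ q → ∀ᵐ s ∂μ, ∫ t, f (s, t) * q t ∂ν = 0 := by
    intro q hq
    have hi := hq.int_comp hf measurable_snd
    apply ae_zero_of_Tst (g := fun s => ∫ t, f (s, t) * q t ∂ν) hi.integral_prod_left
    intro p hp
    rw [← h p q hp hq, integral_prod _ (hp.int_mul2 hq hf measurable_fst measurable_snd)]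
    congr 1; ext s
    rw [← integral_mul_const]
    congr 1; ext t
    ring
  apply ae_zero_of_rect hf
  intro A B hA hB
  have hfA : Integrable f ((μ.restrict A).prod ν) := by
    have := hf.integrableOn (s := A ×ˢ univ)
    rwa [IntegrableOn, ← Measure.prod_restrict, Measure.restrict_univ] at this
  have hH : ∀ᵐ t ∂ν, ∫ s, f (s, t) ∂(μ.restrict A) = 0 := by
    apply ae_zero_of_Tst (g := fun t => ∫ s, f (s, t) ∂(μ.restrict A)) hfA.integral_prod_right
    intro q hq
    have e1 : ∀ t, (∫ s, f (s, t) ∂(μ.restrict A)) * q t = ∫ s, f (s, t) * q t ∂(μ.restrict A) :=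
      fun t => by rw [integral_mul_const]
    simp_rw [e1]
    have hi := hq.int_comp hfA measurable_snd
    rw [← integral_integral_swap (f := fun s t => f (s,t) * q t) hi]
    exact integral_eq_zero_of_ae (ae_restrict_of_ae (hG q hq))
  rw [← Measure.prod_restrict, integral_prod_symm]
  · exact integral_eq_zero_of_ae (ae_restrict_of_ae hH)
  · rw [Measure.prod_restrict]
    exact hf.integrableOn

theorem indep_first {α β γ δ : ℝ} (hαβ : α < β) {f : ℝ × ℝ → ℝ}
    (hf : Integrable f ((volume.restrict (Ioo α β)).prod (volume.restrict (Ioo γ δ))))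
    (h : ∀ p q, Tst α β p → Tst γ δ q →
      ∫ z, f z * (deriv p z.1 * q z.2)
        ∂((volume.restrict (Ioo α β)).prod (volume.restrict (Ioo γ δ))) = 0)
    {a : ℝ → ℝ} (ha : Tst α β a) (ha1 : ∫ x, a x = 1) :
    ∀ᵐ z ∂((volume.restrict (Ioo α β)).prod (volume.restrict (Ioo γ δ))),
      f z = ∫ s in Ioo α β, f (s, z.2) * a s := by
  set μ := (volume.restrict (Ioo α β))
  set ν := (volume.restrict (Ioo γ δ))
  have hia := ha.int_comp hf measurable_fst
  have hth : Integrable (fun t => ∫ s, f (s, t) * a s ∂μ) ν := hia.integral_prod_right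
  have hth2 : Integrable (fun z : ℝ × ℝ => ∫ s, f (s, z.2) * a s ∂μ) (μ.prod ν) := by
    have := (integrable_const (1:ℝ) (μ := μ)).mul_prod hth
    simpa using this
  have := ae_zero_of_tensor (f := fun z => f z - ∫ s, f (s, z.2) * a s ∂μ) (hf.sub hth2) ?_
  · filter_upwards [this] with z hz
    linarith
  intro p q hp hq
  obtain ⟨P, hP, hP'⟩ := hp.decomp hαβ ha ha1
  have e1 : ∫ z, f z * (p z.1 * q z.2) ∂(μ.prod ν)
      = (∫ y, p y) * ∫ z, f z * (a z.1 * q z.2) ∂(μ.prod ν) := by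
    have : ∀ z : ℝ × ℝ, f z * (p z.1 * q z.2) = (∫ y, p y) * (f z * (a z.1 * q z.2))
        + f z * (deriv P z.1 * q z.2) := fun z => by rw [hP' z.1]; ring
    simp_rw [this]
    rw [integral_add ((ha.int_mul2 hq hf measurable_fst measurable_snd).const_mul _)
      (hP.deriv.int_mul2 hq hf measurable_fst measurable_snd), h P q hP hq,
      integral_const_mul, add_zero]
  have e2 : ∫ z, (∫ s, f (s, z.2) * a s ∂μ) * (p z.1 * q z.2) ∂(μ.prod ν)
      = (∫ y, p y) * ∫ z, f z * (a z.1 * q z.2) ∂(μ.prod ν) := by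
    rw [integral_prod_symm _ (ha.int_mul2 hq hf measurable_fst measurable_snd),
      integral_prod_symm _ (hp.int_mul2 hq hth2 measurable_fst measurable_snd),
      ← integral_const_mul]
    congr 1; ext t
    have hp' : ∫ x, p x ∂μ = ∫ x, p x := by simpa using hp.setIntegral (fun _ => 1)
    dsimp only
    rw [integral_const_mul, integral_mul_const, hp']
    simp_rw [← mul_assoc]
    rw [integral_mul_const]
    ring
  show ∫ z, (f z - ∫ s, f (s, z.2) * a s ∂μ) * (p z.1 * q z.2) ∂(μ.prod ν) = 0
  simp_rw [sub_mul]
  rw [integral_sub (hp.int_mul2 hq hf measurable_fst measurable_snd)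
    (hp.int_mul2 hq hth2 measurable_fst measurable_snd), e1, e2, sub_self]

theorem structure_lemma {α β γ δ : ℝ} (hαβ : α < β) (hγδ : γ < δ) {f : ℝ × ℝ → ℝ}
    (hf : Integrable f ((volume.restrict (Ioo α β)).prod (volume.restrict (Ioo γ δ))))
    (h1 : ∀ p q, Tst α β p → Tst γ δ q →
      ∫ z, f z * (deriv p z.1 * q z.2)
        ∂((volume.restrict (Ioo α β)).prod (volume.restrict (Ioo γ δ))) = 0)
    {X : Type*} [MeasurableSpace X] {m1 m2 : Measure X} [SFinite m1] [SFinite m2]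
    {k1 k2 g1 g2 : X → ℝ} (hk1 : Integrable k1 m1) (hk2 : Integrable k2 m2)
    (hg1 : Measurable g1) (hg2 : Measurable g2)
    (h2 : ∀ p q, Tst α β p → Tst γ δ q →
      ∫ z, f z * (p z.1 * deriv q z.2)
        ∂((volume.restrict (Ioo α β)).prod (volume.restrict (Ioo γ δ))) =
      (- ∫ x, k1 x * p (g1 x) * q (g2 x) ∂m1) - ∫ x, k2 x * p (g1 x) * q (g2 x) ∂m2) :
    ∃ (c : ℝ) (a : ℝ → ℝ), Tst α β a ∧
      ∀ᵐ z ∂((volume.restrict (Ioo α β)).prod (volume.restrict (Ioo γ δ))),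
        f z = c + ((∫ x in {x | g2 x ≤ z.2}, k1 x * a (g1 x) ∂m1)
          + ∫ x in {x | g2 x ≤ z.2}, k2 x * a (g1 x) ∂m2) := by
  obtain ⟨a, ha, ha1⟩ := exists_Tst hαβ
  have hind := indep_first hαβ hf h1 ha ha1
  set μ := (volume.restrict (Ioo α β))
  set ν := (volume.restrict (Ioo γ δ))
  have hia := ha.int_comp hf measurable_fst
  have hth : Integrable (fun t => ∫ s, f (s, t) * a s ∂μ) ν := hia.integral_prod_right
  have hK1 := ha.int_comp hk1 hg1
  have hK2 := ha.int_comp hk2 hg1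
  set F1 : ℝ → ℝ := fun t => ∫ x in {x | g2 x ≤ t}, k1 x * a (g1 x) ∂m1
  set F2 : ℝ → ℝ := fun t => ∫ x in {x | g2 x ≤ t}, k2 x * a (g1 x) ∂m2
  have hFi : ∀ {m : Measure X} {K : X → ℝ}, Integrable K m →
      Integrable (fun t => ∫ x in {x | g2 x ≤ t}, K x ∂m) ν := by
    intro m K hK
    obtain ⟨f1, f2, hf1, hf2, h12⟩ := cumul_diff hK g2
    simp_rw [h12]
    exact ((hf1.locallyIntegrable.integrableOn_isCompact isCompact_Icc).mono_set
      Ioo_subset_Icc_self).sub ((hf2.locallyIntegrable.integrableOn_isCompact isCompact_Icc).mono_set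
      Ioo_subset_Icc_self)
  have hF1 : Integrable F1 ν := hFi hK1
  have hF2 : Integrable F2 ν := hFi hK2
  obtain ⟨c, hc⟩ := const_of_Tst hγδ
    (g := fun t => (∫ s, f (s, t) * a s ∂μ) - (F1 t + F2 t)) (hth.sub (hF1.add hF2)) (by
    intro b hb
    have e1 : ∫ t, (∫ s, f (s, t) * a s ∂μ) * deriv b t ∂ν =
        (- ∫ x, k1 x * a (g1 x) * b (g2 x) ∂m1) - ∫ x, k2 x * a (g1 x) * b (g2 x) ∂m2 := by
      rw [← h2 a b ha hb,
        integral_prod_symm _ (ha.int_mul2 hb.deriv hf measurable_fst measurable_snd)]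
      congr 1; ext t
      simp_rw [← mul_assoc]
      rw [integral_mul_const]
    have hb1 : ContDiff ℝ 1 b := hb.smooth.of_le (by exact_mod_cast le_top)
    have e2 : ∫ t, F1 t * deriv b t ∂ν = - ∫ x, k1 x * a (g1 x) * b (g2 x) ∂m1 := by
      rw [hb.deriv.setIntegral]
      exact cumul_ibp hK1 hg2 hb1 hb.cpt
    have e3 : ∫ t, F2 t * deriv b t ∂ν = - ∫ x, k2 x * a (g1 x) * b (g2 x) ∂m2 := by
      rw [hb.deriv.setIntegral]
      exact cumul_ibp hK2 hg2 hb1 hb.cpt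
    show ∫ t, ((∫ s, f (s, t) * a s ∂μ) - (F1 t + F2 t)) * deriv b t ∂ν = 0
    simp_rw [sub_mul, add_mul]
    have hs : Integrable (fun t => F1 t * deriv b t + F2 t * deriv b t) ν :=
      (hb.deriv.int_mul hF1).add (hb.deriv.int_mul hF2)
    rw [integral_sub (hb.deriv.int_mul hth) hs,
      integral_add (hb.deriv.int_mul hF1) (hb.deriv.int_mul hF2), e1, e2, e3]
    ring)
  refine ⟨c, a, ha, ?_⟩
  have hc2 : ∀ᵐ z ∂(μ.prod ν), (∫ s, f (s, z.2) * a s ∂μ) - (F1 z.2 + F2 z.2) = c :=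
    Measure.quasiMeasurePreserving_snd.ae hc
  filter_upwards [hind, hc2] with z hz1 hz2
  rw [hz1]
  show _ = c + (F1 z.2 + F2 z.2)
  linarith

/-- Smooth test functions on the rectangle. -/
structure TstR (φ : V2 → ℝ) : Prop where
  smooth : ContDiff ℝ (⊤ : ℕ∞) φ
  cpt : HasCompactSupport φ
  supp : tsupport φ ⊆ Rect

theorem measurableSet_Rect : MeasurableSet Rect := by
  apply MeasurableSet.inter
  · exact (measurable_pi_apply 0) measurableSet_Ioo
  · exact (measurable_pi_apply 1) measurableSet_Ioo

/-- pairing -/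
def mk2 (z : ℝ × ℝ) : V2 := ![z.1, z.2]

@[simp] theorem mk2_zero (z : ℝ × ℝ) : mk2 z 0 = z.1 := rfl
@[simp] theorem mk2_one (z : ℝ × ℝ) : mk2 z 1 = z.2 := rfl

theorem mk2_eq : mk2 = (MeasurableEquiv.finTwoArrow (α := ℝ)).symm := rfl

theorem mk2_surj (x : V2) : mk2 (x 0, x 1) = x := by
  ext i; fin_cases i <;> rfl

theorem measurable_mk2 : Measurable mk2 := (MeasurableEquiv.finTwoArrow (α := ℝ)).symm.measurable

theorem continuous_mk2 : Continuous mk2 := by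
  apply continuous_pi
  intro i; fin_cases i
  · exact continuous_fst
  · exact continuous_snd

theorem measurableEmbedding_mk2 : MeasurableEmbedding mk2 :=
  (MeasurableEquiv.finTwoArrow (α := ℝ)).symm.measurableEmbedding

theorem mk2_pre : mk2 ⁻¹' Rect = Ioo (0:ℝ) 1 ×ˢ Ioo (-1:ℝ) 1 := by
  ext z; simp [Rect]

theorem mp_mk2 : MeasurePreserving mk2 volume volume :=
  (volume_preserving_finTwoArrow ℝ).symm

theorem mp_Rect : MeasurePreserving mk2
    ((volume.restrict (Ioo (0:ℝ) 1)).prod (volume.restrict (Ioo (-1:ℝ) 1)))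
    (volume.restrict Rect) := by
  rw [Measure.prod_restrict, ← mk2_pre]
  exact mp_mk2.restrict_preimage measurableSet_Rect

theorem int_Rect (F : V2 → ℝ) : ∫ x in Rect, F x = ∫ z, F (mk2 z)
    ∂((volume.restrict (Ioo (0:ℝ) 1)).prod (volume.restrict (Ioo (-1:ℝ) 1))) :=
  (mp_Rect.integral_comp measurableEmbedding_mk2 F).symm

theorem Rect_sub : Rect ⊆ Icc (![0, -1] : V2) ![1, 1] := by
  intro x hx
  constructor
  · intro i; fin_cases i
    · exact hx.1.1.le
    · exact hx.2.1.le
  · intro i; fin_cases i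
    · exact hx.1.2.le
    · exact hx.2.2.le

theorem cont_intOn {f : V2 → ℝ} (hf : Continuous f) : IntegrableOn f Rect :=
  (hf.continuousOn.integrableOn_compact isCompact_Icc).mono_set Rect_sub

instance : IsFiniteMeasure (volume.restrict Rect : Measure V2) :=
  ⟨by simpa using (measure_mono Rect_sub).trans_lt isCompact_Icc.measure_lt_top⟩

theorem TstR.zero {φ : V2 → ℝ} (hφ : TstR φ) {x : V2} (hx : x ∉ Rect) : φ x = 0 :=
  image_eq_zero_of_notMem_tsupport (fun h => hx (hφ.supp h))

theorem TstR.contDiff_pd {φ : V2 → ℝ} (hφ : TstR φ) (j : Fin 2) :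
    Continuous (pd j φ) := by
  have := hφ.smooth.continuous_fderiv (by simp)
  exact this.clm_apply continuous_const

theorem TstR.cpt_pd {φ : V2 → ℝ} (hφ : TstR φ) (j : Fin 2) : HasCompactSupport (pd j φ) :=
  hφ.cpt.fderiv_apply ℝ _

theorem TstR.zero_pd {φ : V2 → ℝ} (hφ : TstR φ) (j : Fin 2) {x : V2} (hx : x ∉ Rect) :
    pd j φ x = 0 := by
  have : x ∉ tsupport (fderiv ℝ φ) := fun h => hx (hφ.supp (tsupport_fderiv_subset ℝ h))
  unfold pd
  rw [image_eq_zero_of_notMem_tsupport this]; rfl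

theorem TstR.bdd {φ : V2 → ℝ} (hφ : TstR φ) : ∃ C, ∀ x, ‖φ x‖ ≤ C :=
  hφ.cpt.exists_bound_of_continuous hφ.smooth.continuous

theorem TstR.int_mul {φ : V2 → ℝ} (hφ : TstR φ) {m : Measure V2} {g : V2 → ℝ}
    (hg : Integrable g m) : Integrable (fun x => φ x * g x) m := by
  obtain ⟨C, hC⟩ := hφ.bdd
  exact hg.bdd_mul hφ.smooth.continuous.aestronglyMeasurable (ae_of_all _ hC)

theorem TstR.int_mul_pd {φ : V2 → ℝ} (hφ : TstR φ) (j : Fin 2) {m : Measure V2} {g : V2 → ℝ}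
    (hg : Integrable g m) : Integrable (fun x => g x * pd j φ x) m := by
  obtain ⟨C, hC⟩ := (hφ.cpt_pd j).exists_bound_of_continuous (hφ.contDiff_pd j)
  exact hg.mul_bdd (hφ.contDiff_pd j).aestronglyMeasurable (ae_of_all _ hC)

theorem smooth_ibp {φ L : V2 → ℝ} (hφ : TstR φ) (hL : ContDiff ℝ 1 L) (j : Fin 2) :
    ∫ x in Rect, L x * pd j φ x = - ∫ x in Rect, φ x * pd j L x := by
  rw [setIntegral_eq_integral_of_forall_compl_eq_zero, setIntegral_eq_integral_of_forall_compl_eq_zero]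
  rotate_left
  · intro x hx; rw [hφ.zero hx, zero_mul]
  · intro x hx; rw [hφ.zero_pd j hx, mul_zero]
  have hLc : Continuous (fun x => fderiv ℝ L x (Pi.single j 1)) :=
    (hL.continuous_fderiv one_ne_zero).clm_apply continuous_const
  have := integral_mul_fderiv_eq_neg_fderiv_mul_of_integrable (μ := (volume : Measure V2))
    (f := L) (g := φ) (v := Pi.single j 1)
    ((hLc.mul hφ.smooth.continuous).integrable_of_hasCompactSupport (hφ.cpt.mul_left))
    ((hL.continuous.mul (hφ.contDiff_pd j)).integrable_of_hasCompactSupport ((hφ.cpt_pd j).mul_left))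
    ((hL.continuous.mul hφ.smooth.continuous).integrable_of_hasCompactSupport (hφ.cpt.mul_left))
    (fun x _ => hL.differentiable one_ne_zero x)
    (fun x _ => hφ.smooth.differentiable (by simp) x)
  unfold pd
  rw [this]
  simp_rw [mul_comm]

theorem tensor_TstR {p q : ℝ → ℝ} (hp : Tst 0 1 p) (hq : Tst (-1) 1 q) :
    TstR (fun x => p (x 0) * q (x 1)) := by
  have hs : tsupport (fun x : V2 => p (x 0) * q (x 1)) ⊆
      {x | x 0 ∈ tsupport p ∧ x 1 ∈ tsupport q} := by
    apply closure_minimal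
    · intro x hx
      exact ⟨subset_closure (left_ne_zero_of_mul hx), subset_closure (right_ne_zero_of_mul hx)⟩
    · have c0 : Continuous (fun x : V2 => x 0) := continuous_apply 0
      have c1 : Continuous (fun x : V2 => x 1) := continuous_apply 1
      exact ((isClosed_tsupport p).preimage c0).inter ((isClosed_tsupport q).preimage c1)
  have hsub : tsupport (fun x : V2 => p (x 0) * q (x 1)) ⊆ Rect :=
    hs.trans fun x hx => ⟨hp.supp hx.1, hq.supp hx.2⟩
  refine ⟨?_, ?_, hsub⟩
  · exact (hp.smooth.comp (contDiff_apply ℝ ℝ 0)).mul (hq.smooth.comp (contDiff_apply ℝ ℝ 1))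
  · exact isCompact_Icc.of_isClosed_subset (isClosed_tsupport _) (hsub.trans Rect_sub)

theorem pd_tensor {p q : ℝ → ℝ} (hp : Tst 0 1 p) (hq : Tst (-1) 1 q) (x : V2) :
    pd 0 (fun x => p (x 0) * q (x 1)) x = deriv p (x 0) * q (x 1) ∧
    pd 1 (fun x => p (x 0) * q (x 1)) x = p (x 0) * deriv q (x 1) := by
  have h0 : HasFDerivAt (fun x : V2 => p (x 0)) (deriv p (x 0) • ContinuousLinearMap.proj (R := ℝ) (φ := fun _ : Fin 2 => ℝ) 0) x :=
    ((hp.smooth.differentiable (by simp) (x 0)).hasDerivAt).comp_hasFDerivAt x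
      (hasFDerivAt_apply (𝕜 := ℝ) 0 x)
  have h1 : HasFDerivAt (fun x : V2 => q (x 1)) (deriv q (x 1) • ContinuousLinearMap.proj (R := ℝ) (φ := fun _ : Fin 2 => ℝ) 1) x :=
    ((hq.smooth.differentiable (by simp) (x 1)).hasDerivAt).comp_hasFDerivAt x
      (hasFDerivAt_apply (𝕜 := ℝ) 1 x)
  have h := (h0.mul h1).fderiv
  unfold pd
  constructor <;> erw [h] <;> simp <;> ring

theorem pd_coord (j l : Fin 2) (x : V2) : pd j (fun x => x l) x = if j = l then 1 else 0 := by
  unfold pd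
  rw [(hasFDerivAt_apply (𝕜 := ℝ) l x).fderiv]
  simp [Pi.single_apply, eq_comm]


theorem SO2_tr {R : Mat2} (hR : R ∈ SO2) : R.transpose * R = 1 :=
  mul_eq_one_comm.1 hR.1

theorem ae_Rect {P : V2 → Prop}
    (h : ∀ᵐ z ∂((volume.restrict (Ioo (0:ℝ) 1)).prod (volume.restrict (Ioo (-1:ℝ) 1))), P (mk2 z)) :
    ∀ᵐ x ∂(volume.restrict Rect), P x := by
  rw [← mp_Rect.map_eq, measurableEmbedding_mk2.ae_map_iff]
  exact h

/-- Scalar version. -/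
theorem scalar_rev {w : V2 → ℝ} (hw : IntegrableOn w Rect) {σ : Measure V2} [IsFiniteMeasure σ]
    {h k : Fin 2 → V2 → ℝ} (hh : ∀ j, IntegrableOn (h j) Rect) (hk : ∀ j, Integrable (k j) σ)
    (ibp : ∀ φ, TstR φ → ∀ j, ∫ x in Rect, w x * pd j φ x =
      (- ∫ x in Rect, φ x * h j x) - ∫ x, φ x * k j x ∂σ)
    (h0 : ∀ᵐ x ∂(volume.restrict Rect), h 0 x = 0) (k0 : ∀ᵐ x ∂σ, k 0 x = 0) :
    ∃ F : ℝ → ℝ, BoundedVariationOn F (Ioo (-1) 1) ∧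
      (∀ᵐ x ∂(volume.restrict Rect), w x = F (x 1)) ∧
      ((∀ᵐ x ∂(volume.restrict Rect), h 1 x = 0) → (∀ᵐ x ∂σ, k 1 x = 0) → ∃ c, ∀ t, F t = c) := by
  have hf : Integrable (fun z => w (mk2 z))
      ((volume.restrict (Ioo (0:ℝ) 1)).prod (volume.restrict (Ioo (-1:ℝ) 1))) :=
    mp_Rect.integrable_comp_of_integrable hw
  obtain ⟨c, a, ha, hc⟩ := structure_lemma (zero_lt_one) (by norm_num : (-1:ℝ) < 1) hf
    (by
      intro p q hp hq
      have hφ := tensor_TstR hp hq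
      have := ibp _ hφ 0
      rw [int_Rect] at this
      simp_rw [(pd_tensor hp hq _).1] at this
      have z1 : ∫ x in Rect, p (x 0) * q (x 1) * h 0 x = 0 :=
        integral_eq_zero_of_ae (by filter_upwards [h0] with x hx; simp [hx])
      have z2 : ∫ x, p (x 0) * q (x 1) * k 0 x ∂σ = 0 :=
        integral_eq_zero_of_ae (by filter_upwards [k0] with x hx; simp [hx])
      rw [z1, z2] at this
      simpa using this)
    (hh 1) (hk 1) (measurable_pi_apply (0 : Fin 2)) (measurable_pi_apply (1 : Fin 2))
    (by
      intro p q hp hq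
      have hφ := tensor_TstR hp hq
      have := ibp _ hφ 1
      rw [int_Rect] at this
      simp_rw [(pd_tensor hp hq _).2] at this
      refine Eq.trans this ?_
      congr 2
      · congr 1; ext x; ring
      · ext x; ring)
  have hK1 := ha.int_comp (hh 1) (measurable_pi_apply (0 : Fin 2))
  have hK2 := ha.int_comp (hk 1) (measurable_pi_apply (0 : Fin 2))
  obtain ⟨f1, f2, hf1, hf2, h12⟩ := cumul_diff hK1 (fun x : V2 => x 1)
  obtain ⟨f3, f4, hf3, hf4, h34⟩ := cumul_diff hK2 (fun x : V2 => x 1)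
  refine ⟨fun t => c + ((∫ x in {x : V2 | x 1 ≤ t}, h 1 x * a (x 0) ∂(volume.restrict Rect))
          + ∫ x in {x : V2 | x 1 ≤ t}, k 1 x * a (x 0) ∂σ), ?_, ?_, ?_⟩
  · have := (BV_sub_mono ((hf1.add hf3).const_add c) (hf2.add hf4) (-1) 1).mono Ioo_subset_Icc_self
    convert this using 1
    ext t
    rw [h12, h34]
    show _ = c + (f1 t + f3 t) - (f2 t + f4 t)
    ring
  · exact ae_Rect hc
  · intro hz kz
    refine ⟨c, fun t => ?_⟩
    have z1 : ∫ x in {x : V2 | x 1 ≤ t}, h 1 x * a (x 0) ∂(volume.restrict Rect) = 0 :=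
      integral_eq_zero_of_ae (ae_restrict_of_ae (by filter_upwards [hz] with x hx; simp [hx]))
    have z2 : ∫ x in {x : V2 | x 1 ≤ t}, k 1 x * a (x 0) ∂σ = 0 :=
      integral_eq_zero_of_ae (ae_restrict_of_ae (by filter_upwards [kz] with x hx; simp [hx]))
    show c + (_ + _) = c
    rw [z1, z2]; simp

theorem entry_le (M : Mat2) (h : mnorm M = 1) (i j : Fin 2) : ‖M i j‖ ≤ 1 := by
  unfold mnorm at h
  have h2 : ∑ i, ∑ j, M i j ^ 2 = 1 := by
    rwa [Real.sqrt_eq_one] at h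
  simp only [Fin.sum_univ_two] at h2
  rw [Real.norm_eq_abs, ← sq_le_one_iff_abs_le_one]
  fin_cases i <;> fin_cases j <;> simp only [Fin.zero_eta, Fin.mk_one, Fin.isValue] <;>
  nlinarith [sq_nonneg (M 0 0), sq_nonneg (M 0 1), sq_nonneg (M 1 0), sq_nonneg (M 1 1)]

theorem rev_dir (u : V2 → V2) (gu : V2 → Mat2) (σ : Measure V2) (gs : V2 → Mat2)
    (hBV : HasBVDerivOn Rect u gu σ gs) (R : Mat2) (hR : R ∈ SO2) (γ : V2 → ℝ)
    (hgu : ∀ᵐ x ∂(volume.restrict Rect), gu x = R * (1 + γ x • outer e1 e2))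
    (ϱ : V2 → V2) (hgs : ∀ᵐ x ∂σ,
       gs x = outer (ϱ x) e2 ∧ vnorm (ϱ x) = 1 ∧ ∃ s : ℝ, ϱ x = s • R.mulVec e1) :
    memAparOn Rect (-1) 1 u := by
  have : IsFiniteMeasure σ := ⟨lt_top_iff_ne_top.2 hBV.fin⟩
  have hui : ∀ i, IntegrableOn (fun x => u x i) Rect := fun i => hBV.int_u.eval i
  have hgsi : ∀ i j, Integrable (fun x => gs x i j) σ := fun i j =>
    Integrable.of_bound (hBV.meas_gs i j).aestronglyMeasurable 1
      (by filter_upwards [hBV.unit] with x hx using entry_le _ hx i j)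
  set w : Fin 2 → V2 → ℝ := fun l x => (∑ i, R i l * u x i) - x l with hw
  set h : Fin 2 → Fin 2 → V2 → ℝ := fun l j x => (∑ i, R i l * gu x i j) - (if j = l then 1 else 0)
    with hh
  set k : Fin 2 → Fin 2 → V2 → ℝ := fun l j x => ∑ i, R i l * gs x i j with hk
  have hwi : ∀ l, IntegrableOn (w l) Rect := fun l =>
    (integrable_finsetSum _ fun i _ => (hui i).const_mul _).sub (cont_intOn (continuous_apply l))
  have hhi : ∀ l j, IntegrableOn (h l j) Rect := fun l j =>
    (integrable_finsetSum _ fun i _ => (hBV.int_gu i j).const_mul _).sub (integrable_const _)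
  have hki : ∀ l j, Integrable (k l j) σ := fun l j =>
    (integrable_finsetSum _ fun i _ => (hgsi i j).const_mul _)
  have hibp : ∀ l φ, TstR φ → ∀ j, ∫ x in Rect, w l x * pd j φ x =
      (- ∫ x in Rect, φ x * h l j x) - ∫ x, φ x * k l j x ∂σ := by
    intro l φ hφ j
    have hb := fun i => hBV.ibp φ hφ.smooth hφ.cpt hφ.supp i j
    have hx := smooth_ibp hφ (contDiff_apply ℝ ℝ l) j
    simp_rw [pd_coord] at hx
    have e1 : ∫ x in Rect, w l x * pd j φ x =
        R 0 l * (∫ x in Rect, u x 0 * pd j φ x) + R 1 l * (∫ x in Rect, u x 1 * pd j φ x)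
        - ∫ x in Rect, x l * pd j φ x := by
      rw [← integral_const_mul, ← integral_const_mul, ← integral_add, ← integral_sub]
      · congr 1; ext x; simp only [hw, Fin.sum_univ_two]; ring
      · exact ((hφ.int_mul_pd j (hui 0)).const_mul _).add ((hφ.int_mul_pd j (hui 1)).const_mul _)
      · exact hφ.int_mul_pd j (cont_intOn (continuous_apply l))
      · exact (hφ.int_mul_pd j (hui 0)).const_mul _
      · exact (hφ.int_mul_pd j (hui 1)).const_mul _
    have e2 : ∫ x in Rect, φ x * h l j x = R 0 l * (∫ x in Rect, φ x * gu x 0 j) +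
        R 1 l * (∫ x in Rect, φ x * gu x 1 j) - ∫ x in Rect, φ x * (if j = l then 1 else 0) := by
      rw [← integral_const_mul, ← integral_const_mul, ← integral_add, ← integral_sub]
      · congr 1; ext x; simp only [hh, Fin.sum_univ_two]; ring
      · exact ((hφ.int_mul (hBV.int_gu 0 j)).const_mul _).add
          ((hφ.int_mul (hBV.int_gu 1 j)).const_mul _)
      · exact hφ.int_mul (integrable_const _)
      · exact (hφ.int_mul (hBV.int_gu 0 j)).const_mul _
      · exact (hφ.int_mul (hBV.int_gu 1 j)).const_mul _
    have e3 : ∫ x, φ x * k l j x ∂σ = R 0 l * (∫ x, φ x * gs x 0 j ∂σ) +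
        R 1 l * (∫ x, φ x * gs x 1 j ∂σ) := by
      rw [← integral_const_mul, ← integral_const_mul, ← integral_add]
      · congr 1; ext x; simp only [hk, Fin.sum_univ_two]; ring
      · exact (hφ.int_mul (hgsi 0 j)).const_mul _
      · exact (hφ.int_mul (hgsi 1 j)).const_mul _
    rw [e1, e2, e3, hb 0, hb 1, hx]
    ring
  have hRR := SO2_tr hR
  have hR00 : R 0 0 * R 0 0 + R 1 0 * R 1 0 = 1 := by
    have := congrFun (congrFun hRR 0) 0
    simpa [Matrix.mul_apply, Fin.sum_univ_two] using this
  have hR01 : R 0 0 * R 0 1 + R 1 0 * R 1 1 = 0 := by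
    have := congrFun (congrFun hRR 0) 1
    simpa [Matrix.mul_apply, Fin.sum_univ_two] using this
  have hR11 : R 0 1 * R 0 1 + R 1 1 * R 1 1 = 1 := by
    have := congrFun (congrFun hRR 1) 1
    simpa [Matrix.mul_apply, Fin.sum_univ_two] using this
  have S00 : R 0 0 * R 0 0 + R 0 1 * R 0 1 = 1 := by
    have := congrFun (congrFun hR.1 0) 0
    simpa [Matrix.mul_apply, Fin.sum_univ_two] using this
  have S01 : R 0 0 * R 1 0 + R 0 1 * R 1 1 = 0 := by
    have := congrFun (congrFun hR.1 0) 1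
    simpa [Matrix.mul_apply, Fin.sum_univ_two] using this
  have S11 : R 1 0 * R 1 0 + R 1 1 * R 1 1 = 1 := by
    have := congrFun (congrFun hR.1 1) 1
    simpa [Matrix.mul_apply, Fin.sum_univ_two] using this
  have hz : ∀ᵐ x ∂(volume.restrict Rect), h 0 0 x = 0 ∧ h 1 0 x = 0 ∧ h 1 1 x = 0 := by
    filter_upwards [hgu] with x hx
    simp only [hh, hx, Matrix.mul_apply, Fin.sum_univ_two, outer, e1, e2]
    simp
    refine ⟨?_, ?_, ?_⟩
    · linear_combination hR00
    · linear_combination hR01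
    · linear_combination hR11 + γ x * hR01
  have kz : ∀ᵐ x ∂σ, k 0 0 x = 0 ∧ k 1 0 x = 0 ∧ k 1 1 x = 0 := by
    filter_upwards [hgs] with x hx
    obtain ⟨hx1, -, s, hs⟩ := hx
    simp only [hk, hx1, hs, Fin.sum_univ_two, outer, e1, e2]
    simp 
    linear_combination s * hR01
  obtain ⟨F, hF, hF1, -⟩ := scalar_rev (hwi 0) (hhi 0) (hki 0) (hibp 0) (hz.mono fun x hx => hx.1)
    (kz.mono fun x hx => hx.1)
  obtain ⟨G, -, hG1, hG2⟩ := scalar_rev (hwi 1) (hhi 1) (hki 1) (hibp 1) (hz.mono fun x hx => hx.2.1)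
    (kz.mono fun x hx => hx.2.1)
  obtain ⟨c, hc⟩ := hG2 (hz.mono fun x hx => hx.2.2) (kz.mono fun x hx => hx.2.2)
  refine ⟨R, hR, F, R.mulVec ![0, c], hF, ?_⟩
  filter_upwards [hF1, hG1] with x hx0 hx1
  rw [hc] at hx1
  simp only [hw, Fin.sum_univ_two] at hx0 hx1
  ext i
  fin_cases i
  · simp [e1]
    linear_combination R 0 0 * hx0 + R 0 1 * hx1 - u x 0 * S00 - u x 1 * S01
  · simp [e1]
    linear_combination R 1 0 * hx0 + R 1 1 * hx1 - u x 0 * S01 - u x 1 * S11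

theorem Tst.int_deriv {α β : ℝ} {b : ℝ → ℝ} (hb : Tst α β b) : ∫ t, _root_.deriv b t = 0 :=
  integral_eq_zero_of_hasDerivAt_of_integrable
    (fun x => ((hb.smooth.differentiable (by simp)) x).hasDerivAt) hb.deriv.integrable hb.integrable

theorem mono1 {p : ℝ → ℝ} (hp : Monotone p) : ∃ (γ : ℝ → ℝ) (τ : Measure ℝ), Integrable γ ∧
    IsFiniteMeasure τ ∧ τ ⟂ₘ (volume : Measure ℝ) ∧ τ (Ioo (-1) 1)ᶜ = 0 ∧
    ∀ b, Tst (-1) 1 b → ∫ t in Ioo (-1) 1, p t * deriv b t = - (∫ t, b t * γ t) - ∫ t, b t ∂τ := by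
  set f := hp.stieltjesFunction with hf
  set μ := f.measure.restrict (Ioo (-1) 1) with hμ
  have hfin : IsFiniteMeasure μ := by
    refine ⟨?_⟩
    rw [hμ, Measure.restrict_apply_univ]
    refine (measure_mono Ioo_subset_Ioc_self).trans_lt ?_
    rw [StieltjesFunction.measure_Ioc]
    exact ENNReal.ofReal_lt_top
  have hcum : ∀ t ∈ Ioo (-1:ℝ) 1, ∫ x in {x | (id x : ℝ) ≤ t}, (1:ℝ) ∂μ = f t - f (-1) := by
    intro t ht
    rw [setIntegral_const, smul_eq_mul, mul_one, measureReal_def, hμ, Measure.restrict_apply]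
    · have : {x | (id x : ℝ) ≤ t} ∩ Ioo (-1) 1 = Ioc (-1) t := by
        ext x; simp only [id, mem_inter_iff, mem_setOf_eq, mem_Ioo, mem_Ioc]
        constructor
        · rintro ⟨h1, h2, h3⟩; exact ⟨h2, h1⟩
        · rintro ⟨h1, h2⟩; exact ⟨h2, h1, h2.trans_lt ht.2⟩
      rw [this, StieltjesFunction.measure_Ioc, ENNReal.toReal_ofReal]
      exact sub_nonneg.2 (f.mono ht.1.le)
    · exact measurableSet_Iic
  have hae : ∀ᵐ t : ℝ, f t = p t := by
    have := hp.countable_not_continuousAt.measure_zero volume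
    filter_upwards [compl_mem_ae_iff.2 this] with t ht
    simp only [mem_compl_iff, mem_setOf_eq, not_not] at ht
    rw [hf, hp.stieltjesFunction_eq]
    exact ht.continuousWithinAt.rightLim_eq
  refine ⟨fun t => (μ.rnDeriv volume t).toReal, μ.singularPart volume,
    Measure.integrable_toReal_rnDeriv, ⟨(Measure.singularPart_le _ _ _).trans_lt (measure_lt_top μ _)⟩,
    Measure.mutuallySingular_singularPart _ _, ?_, ?_⟩
  · refine le_antisymm ((Measure.singularPart_le _ _ _).trans ?_) (zero_le)
    rw [hμ, Measure.restrict_apply measurableSet_Ioo.compl]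
    simp
  · intro b hb
    have h1 := cumul_ibp (μ := μ) (k := fun _ => (1:ℝ)) (integrable_const _) measurable_id
      (hb.smooth.of_le (by simp)) hb.cpt
    rw [← hb.deriv.setIntegral] at h1
    have h2 : ∫ t in Ioo (-1:ℝ) 1, p t * deriv b t
        = ∫ t in Ioo (-1:ℝ) 1, ((∫ x in {x | (id x : ℝ) ≤ t}, (1:ℝ) ∂μ) * deriv b t + f (-1) * deriv b t) := by
      apply integral_congr_ae
      filter_upwards [ae_restrict_mem measurableSet_Ioo, ae_restrict_of_ae hae] with t ht ht2
      rw [hcum t ht, ← ht2]; ring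
    have hbi : ∀ m : Measure ℝ, IsFiniteMeasure m → Integrable b m := fun m _ => by
      obtain ⟨C, hC⟩ := hb.bdd
      exact Integrable.of_bound hb.smooth.continuous.aestronglyMeasurable C (ae_of_all _ hC)
    have hi1 : IntegrableOn (fun t => (∫ x in {x | (id x : ℝ) ≤ t}, (1:ℝ) ∂μ) * deriv b t) (Ioo (-1) 1) := by
      have : IntegrableOn (fun t => (f t - f (-1)) * deriv b t) (Ioo (-1) 1) := by
        apply hb.deriv.int_mul
        apply Integrable.sub _ (integrable_const _)
        exact ((f.mono.monotoneOn (Icc (-1:ℝ) 1)).integrableOn_isCompact isCompact_Icc).mono_set Ioo_subset_Icc_self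
      refine this.congr_fun (fun t ht => ?_) measurableSet_Ioo
      show _ = _ * _
      rw [hcum t ht]
    rw [h2, integral_add hi1 (hb.deriv.int_mul (integrable_const _)), h1, hb.deriv.setIntegral,
      integral_const_mul (f (-1)), hb.int_deriv, mul_zero, add_zero]
    simp only [one_mul, id]
    have h3 : ∫ x, b x ∂μ = ∫ x, b x ∂(μ.singularPart volume) +
        ∫ x, b x ∂((volume : Measure ℝ).withDensity (μ.rnDeriv volume)) := by
      conv_lhs => rw [μ.haveLebesgueDecomposition_add volume]
      have : IsFiniteMeasure ((volume : Measure ℝ).withDensity (μ.rnDeriv volume)) :=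
        ⟨(Measure.withDensity_rnDeriv_le _ _ _).trans_lt (measure_lt_top μ _)⟩
      have : IsFiniteMeasure (μ.singularPart volume) :=
        ⟨(Measure.singularPart_le _ _ _).trans_lt (measure_lt_top μ _)⟩
      rw [integral_add_measure (hbi _ inferInstance) (hbi _ inferInstance)]
    rw [h3, integral_withDensity_eq_integral_toReal_smul (Measure.measurable_rnDeriv _ _)
      (Measure.rnDeriv_lt_top _ _)]
    simp only [smul_eq_mul, mul_comm]
    ring

theorem bv1 {ϑ : ℝ → ℝ} (h : BoundedVariationOn ϑ (Ioo (-1) 1)) : ∃ p q : ℝ → ℝ, Monotone p ∧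
    Monotone q ∧ ∀ t ∈ Ioo (-1:ℝ) 1, ϑ t = p t - q t := by
  have h0 : (0:ℝ) ∈ Ioo (-1:ℝ) 1 := by simp
  set V := (eVariationOn ϑ (Ioo (-1) 1)).toReal
  have hb : ∀ t, |variationOnFromTo ϑ (Ioo (-1) 1) 0 t| ≤ V := fun t =>
    variationOnFromTo.abs_le_eVariationOn h
  have hb2 : ∀ t ∈ Ioo (-1:ℝ) 1, |ϑ t - ϑ 0| ≤ V := fun t ht => h.dist_le ht h0
  obtain ⟨p, hp, hpe⟩ := (variationOnFromTo.monotoneOn h.locallyBoundedVariationOn h0).exists_monotone_extension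
    ⟨-V, by rintro _ ⟨t, ht, rfl⟩; exact (abs_le.1 (hb t)).1⟩
    ⟨V, by rintro _ ⟨t, ht, rfl⟩; exact (abs_le.1 (hb t)).2⟩
  obtain ⟨q, hq, hqe⟩ := (variationOnFromTo.sub_self_monotoneOn h.locallyBoundedVariationOn h0).exists_monotone_extension
    ⟨-V - V - ϑ 0, by
      rintro _ ⟨t, ht, rfl⟩
      have := abs_le.1 (hb t)
      have := abs_le.1 (hb2 t ht)
      simp only [Pi.sub_apply]; linarith⟩
    ⟨V + V - ϑ 0, by
      rintro _ ⟨t, ht, rfl⟩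
      have := abs_le.1 (hb t)
      have := abs_le.1 (hb2 t ht)
      simp only [Pi.sub_apply]; linarith⟩
  refine ⟨p, q, hp, hq, fun t ht => ?_⟩
  rw [← hpe ht, ← hqe ht]; simp

theorem bv_int {ϑ : ℝ → ℝ} (h : BoundedVariationOn ϑ (Ioo (-1) 1)) : IntegrableOn ϑ (Ioo (-1) 1) := by
  obtain ⟨p, q, hp, hq, he⟩ := bv1 h
  have := (((hp.monotoneOn (Icc (-1:ℝ) 1)).integrableOn_isCompact isCompact_Icc (μ := volume)).sub
    ((hq.monotoneOn (Icc (-1:ℝ) 1)).integrableOn_isCompact isCompact_Icc)).mono_set Ioo_subset_Icc_self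
  exact IntegrableOn.congr_fun this (fun t ht => (he t ht).symm) measurableSet_Ioo

theorem bv2 {ϑ : ℝ → ℝ} (h : BoundedVariationOn ϑ (Ioo (-1) 1)) :
    ∃ (γ : ℝ → ℝ) (σ : Measure ℝ) (S : ℝ → ℝ), Integrable γ ∧
    IsFiniteMeasure σ ∧ σ ⟂ₘ (volume : Measure ℝ) ∧ σ (Ioo (-1) 1)ᶜ = 0 ∧ Measurable S ∧
    (∀ t, S t = 1 ∨ S t = -1) ∧
    ∀ b, Tst (-1) 1 b → ∫ t in Ioo (-1) 1, ϑ t * deriv b t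
      = - (∫ t in Ioo (-1) 1, b t * γ t) - ∫ t, b t * S t ∂σ := by
  obtain ⟨p, q, hp, hq, he⟩ := bv1 h
  obtain ⟨γp, τp, ip, fp, sp, cp, ep⟩ := mono1 hp
  obtain ⟨γq, τq, iq, fq, sq, cq, eq⟩ := mono1 hq
  set τ := τp + τq with hτ
  have acp : τp ≪ τ := Measure.AbsolutelyContinuous.rfl.add_right _
  have acq : τq ≪ τ := by
    rw [hτ, add_comm]; exact Measure.AbsolutelyContinuous.rfl.add_right _
  set H : ℝ → ℝ := fun t => (τp.rnDeriv τ t).toReal - (τq.rnDeriv τ t).toReal with hH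
  have mH : Measurable H :=
    (Measure.measurable_rnDeriv _ _).ennreal_toReal.sub (Measure.measurable_rnDeriv _ _).ennreal_toReal
  have iH : Integrable H τ := Measure.integrable_toReal_rnDeriv.sub Measure.integrable_toReal_rnDeriv
  have acσ : τ.withDensity (fun t => ENNReal.ofReal |H t|) ≪ τ := withDensity_absolutelyContinuous _ _
  refine ⟨fun t => γp t - γq t, τ.withDensity (fun t => ENNReal.ofReal |H t|),
    fun t => if 0 ≤ H t then 1 else -1, ip.sub iq, ?_, ?_, ?_, ?_, ?_, ?_⟩
  · exact isFiniteMeasure_withDensity_ofReal iH.abs.2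
  · exact (sp.add_left sq).mono_ac acσ Measure.AbsolutelyContinuous.rfl
  · exact acσ (by simp [hτ, cp, cq])
  · exact Measurable.ite (measurableSet_le measurable_const mH) measurable_const measurable_const
  · intro t
    by_cases hh : 0 ≤ H t <;> simp [hh]
  · intro b hb
    have hI : ∀ r : ℝ → ℝ, Monotone r → IntegrableOn (fun t => r t * deriv b t) (Ioo (-1) 1) := fun r hr =>
      hb.deriv.int_mul (((hr.monotoneOn (Icc (-1:ℝ) 1)).integrableOn_isCompact isCompact_Icc).mono_set Ioo_subset_Icc_self)
    have h1 : ∫ t in Ioo (-1:ℝ) 1, ϑ t * deriv b t =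
        (∫ t in Ioo (-1:ℝ) 1, p t * deriv b t) - ∫ t in Ioo (-1:ℝ) 1, q t * deriv b t := by
      rw [← integral_sub (hI p hp) (hI q hq)]
      apply setIntegral_congr_fun measurableSet_Ioo
      intro t ht
      simp only [he t ht]; ring
    have hbm : ∀ (m : Measure ℝ) (g : ℝ → ℝ), Integrable g m → Integrable (fun t => b t * g t) m := by
      intro m g hg
      simpa only [mul_comm] using hb.int_mul hg
    rw [h1, ep b hb, eq b hb]
    have h2 : ∫ t in Ioo (-1:ℝ) 1, b t * (γp t - γq t) = (∫ t, b t * γp t) - ∫ t, b t * γq t := by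
      rw [← integral_sub (hbm _ _ ip) (hbm _ _ iq)]
      have := hb.setIntegral (fun t => γp t - γq t)
      simp only [mul_comm _ (b _)] at this
      rw [this]; simp only [mul_sub]
    have h3 : ∫ t, b t * (if 0 ≤ H t then (1:ℝ) else -1) ∂(τ.withDensity (fun t => ENNReal.ofReal |H t|))
        = ∫ t, b t * H t ∂τ := by
      rw [integral_withDensity_eq_integral_toReal_smul (mH.abs.ennreal_ofReal) (by simp)]
      congr 1; ext t
      rw [ENNReal.toReal_ofReal (abs_nonneg _), smul_eq_mul]
      split_ifs with hh
      · rw [abs_of_nonneg hh]; ring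
      · rw [abs_of_neg (not_le.1 hh)]; ring
    have h4 : ∫ t, b t * H t ∂τ = (∫ t, b t ∂τp) - ∫ t, b t ∂τq := by
      rw [← integral_rnDeriv_smul acp, ← integral_rnDeriv_smul acq, ← integral_sub]
      · congr 1; ext t; simp only [hH, smul_eq_mul]; ring
      · exact hb.int_mul Measure.integrable_toReal_rnDeriv
      · exact hb.int_mul Measure.integrable_toReal_rnDeriv
    rw [h2, h3, h4]; ring


theorem slice1 {φ : V2 → ℝ} (hφ : TstR φ) (s : ℝ) : Tst (-1) 1 (fun t => φ (mk2 (s, t))) := by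
  have hc : Continuous (fun t : ℝ => mk2 (s, t)) := continuous_mk2.comp (by fun_prop)
  have hs : tsupport (fun t => φ (mk2 (s, t))) ⊆ (fun t : ℝ => mk2 (s, t)) ⁻¹' tsupport φ :=
    closure_minimal (fun t ht => subset_closure ht) ((isClosed_tsupport φ).preimage hc)
  have hsub : tsupport (fun t => φ (mk2 (s, t))) ⊆ Ioo (-1) 1 := fun t ht => (hφ.supp (hs ht)).2
  refine ⟨?_, isCompact_Icc.of_isClosed_subset (isClosed_tsupport _) (hsub.trans Ioo_subset_Icc_self), hsub⟩
  refine hφ.smooth.comp (contDiff_pi.2 fun i => ?_)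
  fin_cases i
  · exact contDiff_const
  · exact contDiff_id

theorem slice0 {φ : V2 → ℝ} (hφ : TstR φ) (t : ℝ) : Tst 0 1 (fun s => φ (mk2 (s, t))) := by
  have hc : Continuous (fun s : ℝ => mk2 (s, t)) := continuous_mk2.comp (by fun_prop)
  have hs : tsupport (fun s => φ (mk2 (s, t))) ⊆ (fun s : ℝ => mk2 (s, t)) ⁻¹' tsupport φ :=
    closure_minimal (fun t ht => subset_closure ht) ((isClosed_tsupport φ).preimage hc)
  have hsub : tsupport (fun s => φ (mk2 (s, t))) ⊆ Ioo 0 1 := fun t ht => (hφ.supp (hs ht)).1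
  refine ⟨?_, isCompact_Icc.of_isClosed_subset (isClosed_tsupport _) (hsub.trans Ioo_subset_Icc_self), hsub⟩
  refine hφ.smooth.comp (contDiff_pi.2 fun i => ?_)
  fin_cases i
  · exact contDiff_id
  · exact contDiff_const

theorem deriv_slice1 {φ : V2 → ℝ} (hφ : TstR φ) (s t : ℝ) :
    deriv (fun t => φ (mk2 (s, t))) t = pd 1 φ (mk2 (s, t)) := by
  have h1 : HasDerivAt (fun t : ℝ => mk2 (s, t)) (Pi.single 1 1) t := by
    rw [hasDerivAt_pi]
    intro i; fin_cases i
    · simpa using hasDerivAt_const t s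
    · simpa using! hasDerivAt_id t
  exact ((hφ.smooth.differentiable (by simp) (mk2 (s, t))).hasFDerivAt.comp_hasDerivAt t h1).deriv

theorem deriv_slice0 {φ : V2 → ℝ} (hφ : TstR φ) (s t : ℝ) :
    deriv (fun s => φ (mk2 (s, t))) s = pd 0 φ (mk2 (s, t)) := by
  have h1 : HasDerivAt (fun s : ℝ => mk2 (s, t)) (Pi.single 0 1) s := by
    rw [hasDerivAt_pi]
    intro i; fin_cases i
    · simpa using! hasDerivAt_id s
    · simpa using hasDerivAt_const s t
  exact ((hφ.smooth.differentiable (by simp) (mk2 (s, t))).hasFDerivAt.comp_hasDerivAt s h1).deriv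

/-- measure -/
def lift2 (σ : Measure ℝ) : Measure V2 := Measure.map mk2 ((volume.restrict (Ioo (0:ℝ) 1)).prod σ)

theorem lift2_vol : lift2 (volume.restrict (Ioo (-1:ℝ) 1)) = volume.restrict Rect := mp_Rect.map_eq

theorem int_lift2 (σ : Measure ℝ) (F : V2 → ℝ) :
    ∫ x, F x ∂(lift2 σ) = ∫ z, F (mk2 z) ∂((volume.restrict (Ioo (0:ℝ) 1)).prod σ) :=
  measurableEmbedding_mk2.integral_map F

theorem integrable_lift2 {σ : Measure ℝ} [IsFiniteMeasure σ] {g : ℝ → ℝ} (hg : Integrable g σ) :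
    Integrable (fun x => g (x 1)) (lift2 σ) := by
  unfold lift2
  rw [measurableEmbedding_mk2.integrable_map_iff]
  exact hg.comp_snd _

theorem integrable_Rect {g : ℝ → ℝ} (hg : IntegrableOn g (Ioo (-1) 1)) :
    IntegrableOn (fun x : V2 => g (x 1)) Rect := by
  have := integrable_lift2 hg
  rwa [lift2_vol] at this

theorem theta_ibp {ϑ γ S : ℝ → ℝ} {σ : Measure ℝ} [IsFiniteMeasure σ]
    (hϑ : IntegrableOn ϑ (Ioo (-1) 1)) (hγ : Integrable γ) (hS : Integrable S σ)
    (h : ∀ b, Tst (-1) 1 b → ∫ t in Ioo (-1) 1, ϑ t * deriv b t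
      = - (∫ t in Ioo (-1) 1, b t * γ t) - ∫ t, b t * S t ∂σ) {φ : V2 → ℝ} (hφ : TstR φ) :
    ∫ x in Rect, ϑ (x 1) * pd 1 φ x
      = - (∫ x in Rect, φ x * γ (x 1)) - ∫ x, φ x * S (x 1) ∂(lift2 σ) := by
  have i1 := hφ.int_mul_pd 1 (integrable_Rect hϑ)
  have i2 := hφ.int_mul (integrable_Rect hγ.integrableOn)
  have i3 := hφ.int_mul (integrable_lift2 hS)
  rw [← lift2_vol] at i1 i2 ⊢
  rw [int_lift2, int_lift2, int_lift2]
  unfold lift2 at i1 i2 i3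
  rw [measurableEmbedding_mk2.integrable_map_iff] at i1 i2 i3
  simp only [Function.comp_def] at i1 i2 i3
  rw [integral_prod _ i1, integral_prod _ i2, integral_prod _ i3, ← integral_neg,
    ← integral_sub (by exact i2.integral_prod_left.neg) i3.integral_prod_left]
  congr 1; ext s
  have := h _ (slice1 hφ s)
  simp only [deriv_slice1 hφ] at this
  simpa using this

theorem theta_ibp0 {ϑ : ℝ → ℝ} (hϑ : IntegrableOn ϑ (Ioo (-1) 1)) {φ : V2 → ℝ} (hφ : TstR φ) :
    ∫ x in Rect, ϑ (x 1) * pd 0 φ x = 0 := by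
  have i1 := hφ.int_mul_pd 0 (integrable_Rect hϑ)
  rw [← lift2_vol] at i1 ⊢
  rw [int_lift2]
  unfold lift2 at i1
  rw [measurableEmbedding_mk2.integrable_map_iff] at i1
  simp only [Function.comp_def] at i1
  rw [integral_prod_symm _ i1]
  apply integral_eq_zero_of_ae
  refine ae_of_all _ fun t => ?_
  have h0 := (slice0 hφ t).deriv.setIntegral (fun _ => ϑ t)
  rw [integral_const_mul, integral_const_mul, (slice0 hφ t).int_deriv, mul_zero, ← integral_const_mul] at h0
  simp only [deriv_slice0 hφ] at h0
  simpa using h0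

theorem fwd_dir (u : V2 → V2) (R : Mat2) (hR : R ∈ SO2) (ϑ : ℝ → ℝ) (c : V2)
    (hϑ : BoundedVariationOn ϑ (Ioo (-1) 1))
    (hu : ∀ᵐ x ∂(volume.restrict Rect), u x = R.mulVec x + ϑ (x 1) • R.mulVec e1 + c) :
    ∃ gu σ gs, HasBVDerivOn Rect u gu σ gs ∧
          ∃ R ∈ SO2, ∃ γ : V2 → ℝ,
            IntegrableOn γ Rect volume ∧
            (∃ γ1 : ℝ → ℝ, ∀ᵐ x ∂(volume.restrict Rect), γ x = γ1 (x 1)) ∧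
            (∀ᵐ x ∂(volume.restrict Rect), gu x = R * (1 + γ x • outer e1 e2)) ∧
            ∃ ϱ : V2 → V2, ∀ᵐ x ∂σ,
              gs x = outer (ϱ x) e2 ∧ vnorm (ϱ x) = 1 ∧ ∃ s : ℝ, ϱ x = s • R.mulVec e1 := by
  have iϑ := bv_int hϑ
  obtain ⟨γ, σ, S, iγ, fσ, sσ, cσ, mS, hS, hb⟩ := bv2 hϑ
  have iS : Integrable S σ := by
    refine Integrable.of_bound mS.aestronglyMeasurable 1 (ae_of_all _ fun t => ?_)
    rcases hS t with h | h <;> simp [h]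
  have hcol : (R 0 0) ^ 2 + (R 1 0) ^ 2 = 1 := by
    have := congrFun (congrFun (SO2_tr hR) 0) 0
    simp [Matrix.mul_apply, Fin.sum_univ_two] at this
    linarith
  have hRe : ∀ i, R.mulVec e1 i = R i 0 := by
    intro i; simp [Matrix.mulVec, dotProduct, Fin.sum_univ_two, e1]
  have hRx : ∀ i (x : V2), R.mulVec x i = R i 0 * x 0 + R i 1 * x 1 := by
    intro i x; simp [Matrix.mulVec, dotProduct, Fin.sum_univ_two]
  have hguv : ∀ (a : ℝ) i, (R * (1 + a • outer e1 e2)) i 0 = R i 0 ∧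
      (R * (1 + a • outer e1 e2)) i 1 = R i 1 + a * R i 0 := by
    intro a i
    constructor <;> simp [Matrix.mul_apply, Fin.sum_univ_two, outer, e1, e2] <;> ring
  have hvn : ∀ x : V2, vnorm (S (x 1) • R.mulVec e1) = 1 := by
    intro x
    unfold vnorm
    rw [Real.sqrt_eq_one]
    simp only [Pi.smul_apply, smul_eq_mul, hRe]
    rcases hS (x 1) with h | h <;> rw [h] <;> linarith
  refine ⟨fun x => R * (1 + γ (x 1) • outer e1 e2), lift2 σ,
    fun x => outer (S (x 1) • R.mulVec e1) e2, ?_, R, hR, fun x => γ (x 1),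
    integrable_Rect iγ.integrableOn, ⟨γ, ae_of_all _ fun _ => rfl⟩, ae_of_all _ fun _ => rfl,
    fun x => S (x 1) • R.mulVec e1, ae_of_all _ fun x => ⟨rfl, hvn x, S (x 1), rfl⟩⟩
  have hL : ∀ i, ContDiff ℝ 1 (fun x : V2 => R i 0 * x 0 + R i 1 * x 1 + c i) := by
    intro i
    exact ((contDiff_const.mul (contDiff_apply ℝ ℝ 0)).add
      (contDiff_const.mul (contDiff_apply ℝ ℝ 1))).add contDiff_const
  have hpd : ∀ i j x, pd j (fun x : V2 => R i 0 * x 0 + R i 1 * x 1 + c i) x = R i j := by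
    intro i j x
    have h0 := hasFDerivAt_apply (𝕜 := ℝ) (0 : Fin 2) x
    have h1 := hasFDerivAt_apply (𝕜 := ℝ) (1 : Fin 2) x
    have := (((h0.const_mul (R i 0)).add (h1.const_mul (R i 1))).add_const (c i)).fderiv
    unfold pd
    erw [this]
    fin_cases j <;> simp
  have hui : ∀ i, ∀ᵐ x ∂(volume.restrict Rect), u x i =
      (R i 0 * x 0 + R i 1 * x 1 + c i) + R i 0 * ϑ (x 1) := by
    intro i
    filter_upwards [hu] with x hx
    rw [hx]
    simp only [Pi.add_apply, Pi.smul_apply, smul_eq_mul, hRe, hRx]; ring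
  refine ⟨?_, ?_, ?_, ?_, ?_, ?_, ?_, ?_⟩
  · refine Integrable.of_eval fun i => ?_
    refine Integrable.congr ?_ ((hui i).mono fun x hx => hx.symm)
    exact (cont_intOn (hL i).continuous).add ((integrable_Rect iϑ).const_mul _)
  · intro i j
    fin_cases j
    · simp only [Fin.zero_eta, (hguv _ _).1]; exact cont_intOn continuous_const
    · simp only [Fin.mk_one, (hguv _ _).2]
      exact (cont_intOn continuous_const).add ((integrable_Rect iγ.integrableOn).mul_const _)
  · unfold lift2
    rw [Measure.map_apply measurable_mk2 MeasurableSet.univ]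
    exact measure_ne_top _ _
  · unfold lift2
    rw [Measure.map_apply measurable_mk2 measurableSet_Rect.compl, preimage_compl, mk2_pre,
      compl_prod_eq_union]
    apply measure_union_null
    · rw [Measure.prod_prod, Measure.restrict_apply measurableSet_Ioo.compl]; simp
    · rw [Measure.prod_prod, cσ, mul_zero]
  · obtain ⟨N, hN, h1, h2⟩ := sσ
    have hN' : MeasurableSet ((fun x : V2 => x 1) ⁻¹' N) := (measurable_pi_apply 1) hN
    refine ⟨(fun x : V2 => x 1) ⁻¹' N, hN', ?_, ?_⟩
    · unfold lift2
      rw [Measure.map_apply measurable_mk2 hN']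
      have : mk2 ⁻¹' ((fun x : V2 => x 1) ⁻¹' N) = univ ×ˢ N := by ext z; simp
      rw [this, Measure.prod_prod, h1, mul_zero]
    · rw [← mp_mk2.map_eq, Measure.map_apply measurable_mk2 hN'.compl]
      have : mk2 ⁻¹' ((fun x : V2 => x 1) ⁻¹' N)ᶜ = univ ×ˢ Nᶜ := by ext z; simp
      rw [this, Measure.volume_eq_prod, Measure.prod_prod, h2, mul_zero]
  · intro i j
    have : Measurable (fun x : V2 => outer (S (x 1) • R.mulVec e1) e2 i j) := by
      simp only [outer, Matrix.of_apply, Pi.smul_apply, smul_eq_mul]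
      exact ((mS.comp (measurable_pi_apply 1)).mul_const _).mul_const _
    exact this.aemeasurable
  · refine ae_of_all _ fun x => ?_
    have := hvn x
    unfold vnorm at this
    unfold mnorm
    simp only [Fin.sum_univ_two, outer, Matrix.of_apply]
    rw [← this]
    simp [e2]
  · intro φ h1 h2 h3 i j
    have hφ : TstR φ := ⟨h1, h2, h3⟩
    have e1' : ∫ x in Rect, u x i * pd j φ x = - R i j * (∫ x in Rect, φ x)
        + R i 0 * ∫ x in Rect, ϑ (x 1) * pd j φ x := by
      have hs := smooth_ibp hφ (hL i) j
      simp only [hpd, integral_mul_const] at hs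
      rw [← integral_const_mul (R i 0)]
      have : - R i j * (∫ x in Rect, φ x) =
        ∫ x in Rect, (R i 0 * x 0 + R i 1 * x 1 + c i) * pd j φ x := by rw [hs]; ring
      rw [this, ← integral_add (hφ.int_mul_pd j (cont_intOn (hL i).continuous))
        ((hφ.int_mul_pd j (integrable_Rect iϑ)).const_mul _)]
      apply integral_congr_ae
      filter_upwards [hui i] with x hx
      rw [hx]; ring
    rw [e1']
    fin_cases j
    · simp only [Fin.zero_eta, (hguv _ _).1, theta_ibp0 iϑ hφ, integral_mul_const]
      simp [outer, e2]; ring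
    · simp only [Fin.mk_one, (hguv _ _).2, theta_ibp iϑ iγ iS hb hφ]
      have q1 : ∫ x in Rect, φ x * (R i 1 + γ (x 1) * R i 0) =
          R i 1 * (∫ x in Rect, φ x) + R i 0 * ∫ x in Rect, φ x * γ (x 1) := by
        rw [← integral_const_mul, ← integral_const_mul, ← integral_add]
        · congr 1; ext x; ring
        · exact (cont_intOn hφ.smooth.continuous).const_mul _
        · exact (hφ.int_mul (integrable_Rect iγ.integrableOn)).const_mul _
      have q2 : ∫ x, φ x * outer (S (x 1) • R.mulVec e1) e2 i 1 ∂(lift2 σ) =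
          R i 0 * ∫ x, φ x * S (x 1) ∂(lift2 σ) := by
        rw [← integral_const_mul]
        congr 1; ext x
        simp only [outer, Matrix.of_apply, Pi.smul_apply, smul_eq_mul, hRe]
        simp [e2]; ring
      rw [q1, q2]; ring

/-- Lemma 5.2: characterization of `A∥` on `Ω = (0,1) × (−1,1)`.
`A∥` consists exactly of the `BV` maps with `∇u = R(I + γ e₁⊗e₂)` for a constant
`R ∈ SO(2)` and `γ ∈ L¹(Ω)` depending only on `x₂`, and with
`D^s u = (ϱ ⊗ e₂)|D^s u|` for some `ϱ` with `|ϱ| = 1` and `ϱ ∥ Re₁` `|D^s u|`-a.e. -/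
theorem charApar_Rect :
    ∀ u : V2 → V2,
      memAparOn Rect (-1) 1 u ↔
        ∃ gu σ gs, HasBVDerivOn Rect u gu σ gs ∧
          ∃ R ∈ SO2, ∃ γ : V2 → ℝ,
            IntegrableOn γ Rect volume ∧
            (∃ γ1 : ℝ → ℝ, ∀ᵐ x ∂(volume.restrict Rect), γ x = γ1 (x 1)) ∧
            (∀ᵐ x ∂(volume.restrict Rect), gu x = R * (1 + γ x • outer e1 e2)) ∧
            ∃ ϱ : V2 → V2, ∀ᵐ x ∂σ,
              gs x = outer (ϱ x) e2 ∧ vnorm (ϱ x) = 1 ∧ ∃ s : ℝ, ϱ x = s • R.mulVec e1 := by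
  intro u
  constructor
  · rintro ⟨R, hR, ϑ, c, hϑ, hu⟩
    exact fwd_dir u R hR ϑ c hϑ hu
  · rintro ⟨gu, σ, gs, hBV, R, hR, γ, _, _, hgu, ϱ, hgs⟩
    exact rev_dir u gu σ gs hBV R hR γ hgu ϱ hgs
end
end

section
/- Let Ω = (0,1)×(−1,1). Then A ∩ W^{1,1}(Ω;ℝ²) = {u ∈ W^{1,1}(Ω;ℝ²) : u(x) = Rx + θ(x₂)Re₁ + c for a.e. x ∈ Ω, with R ∈ SO(2), θ ∈ W^{1,1}(−1,1), c ∈ ℝ²} = {u ∈ W^{1,1}(Ω;ℝ²) : ∇u(x) = R(I + γ(x₂) e₁⊗e₂) for a.e. x ∈ Ω, with R ∈ SO(2) and γ ∈ L¹(−1,1)}. -/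
open MeasureTheory Set Filter Topology
open scoped ENNReal

noncomputable section

/-- one-dimensional test functions -/
structure Tst_s15 (a b : ℝ) (φ : ℝ → ℝ) : Prop where
  smooth : ContDiff ℝ (⊤ : ℕ∞) φ
  cpt : HasCompactSupport φ
  supp : tsupport φ ⊆ Ioo a b

/-- `f` is absolutely continuous on `(a,b)` with derivative `g`. -/
structure IsAC (f g : ℝ → ℝ) (a b : ℝ) : Prop where
  int : IntegrableOn g (Ioo a b) volume
  eq : ∀ s ∈ Ioo a b, ∀ t ∈ Ioo a b, f t - f s = ∫ r in s..t, g r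

lemma Tst_s15.eq_zero {a b : ℝ} {φ : ℝ → ℝ} (h : Tst_s15 a b φ) {t : ℝ} (ht : t ∉ Ioo a b) : φ t = 0 := by
  by_contra hne
  exact ht (h.supp (subset_tsupport _ hne))

lemma Tst_s15.deriv {a b : ℝ} {φ : ℝ → ℝ} (h : Tst_s15 a b φ) : Tst_s15 a b (deriv φ) := by
  refine ⟨?_, h.cpt.deriv, ?_⟩
  · exact (contDiff_infty_iff_deriv.1 h.smooth).2
  · exact (closure_minimal (support_deriv_subset) isClosed_closure).trans h.supp

lemma Tst_s15.continuous {a b : ℝ} {φ : ℝ → ℝ} (h : Tst_s15 a b φ) : Continuous φ := h.smooth.continuous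

lemma Tst_s15.sub_smul {a b : ℝ} {φ η : ℝ → ℝ} (h : Tst_s15 a b φ) (h' : Tst_s15 a b η) (c : ℝ) :
    Tst_s15 a b (fun t => φ t - c * η t) := by
  have hz : tsupport (fun t => φ t - c * η t) ⊆ tsupport φ ∪ tsupport η := by
    refine closure_minimal ?_ (isClosed_closure.union isClosed_closure)
    intro t ht
    by_contra hcon
    simp only [mem_union, not_or] at hcon
    have h1 := image_eq_zero_of_notMem_tsupport hcon.1
    have h2 := image_eq_zero_of_notMem_tsupport hcon.2
    simp [h1, h2] at ht
  refine ⟨h.smooth.sub (contDiff_const.mul h'.smooth), ?_, ?_⟩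
  · exact IsCompact.of_isClosed_subset (h.cpt.isCompact.union h'.cpt.isCompact) isClosed_closure hz
  · exact hz.trans (union_subset h.supp h'.supp)

lemma Tst_s15.integral {a b : ℝ} {φ : ℝ → ℝ} (h : Tst_s15 a b φ) :
    ∫ t in Ioo a b, φ t = ∫ t, φ t :=
  setIntegral_eq_integral_of_forall_compl_eq_zero fun _ ht => h.eq_zero ht

lemma Tst_s15.exists_bound {a b : ℝ} {φ : ℝ → ℝ} (h : Tst_s15 a b φ) : ∃ C, ∀ t, ‖φ t‖ ≤ C :=
  h.continuous.bounded_above_of_compact_support h.cpt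

lemma Tst_s15.integrable {a b : ℝ} {φ : ℝ → ℝ} (h : Tst_s15 a b φ) : Integrable φ :=
  h.continuous.integrable_of_hasCompactSupport h.cpt

lemma Tst_s15.mul_int {a b : ℝ} {φ : ℝ → ℝ} (h : Tst_s15 a b φ) {f : ℝ → ℝ}
    (hf : IntegrableOn f (Ioo a b)) : IntegrableOn (fun t => f t * φ t) (Ioo a b) := by
  obtain ⟨C, hC⟩ := h.exists_bound
  exact Integrable.mul_bdd (c := C) hf h.continuous.aestronglyMeasurable (Eventually.of_forall hC)

lemma exists_tst {a b : ℝ} (hab : a < b) : ∃ φ, Tst_s15 a b φ ∧ ∫ t in Ioo a b, φ t = 1 := by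
  let f : ContDiffBump ((a + b) / 2) := ⟨(b - a) / 8, (b - a) / 4, by linarith, by linarith⟩
  have h : Tst_s15 a b (f.normed volume) := by
    refine ⟨f.contDiff_normed, f.hasCompactSupport_normed, ?_⟩
    rw [f.tsupport_normed_eq]
    intro t ht
    rw [Real.closedBall_eq_Icc] at ht
    change t ∈ Icc ((a + b) / 2 - (b - a) / 4) ((a + b) / 2 + (b - a) / 4) at ht
    constructor <;> linarith [ht.1, ht.2]
  exact ⟨_, h, by rw [h.integral, f.integral_normed]⟩

lemma Tst_s15.primitive {a b : ℝ} (hab : a < b) {η : ℝ → ℝ} (h : Tst_s15 a b η)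
    (h0 : ∫ t in Ioo a b, η t = 0) :
    ∃ β, Tst_s15 a b β ∧ ∀ t, _root_.deriv β t = η t := by
  let β : ℝ → ℝ := fun t => ∫ r in a..t, η r
  have hd : ∀ t, HasDerivAt β (η t) t := fun t =>
    intervalIntegral.integral_hasDerivAt_right (h.continuous.intervalIntegrable _ _)
      (h.continuous.stronglyMeasurableAtFilter _ _) h.continuous.continuousAt
  have hder : _root_.deriv β = η := funext fun t => (hd t).deriv
  obtain ⟨c, d, hac, hdb, hcd⟩ : ∃ c d, a < c ∧ d < b ∧ tsupport η ⊆ Icc c d := by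
    rcases (tsupport η).eq_empty_or_nonempty with he | hne
    · exact ⟨(a+b)/2, (a+b)/2, by linarith, by linarith, by simp [he]⟩
    · have hk : IsCompact (tsupport η) := h.cpt
      refine ⟨sInf (tsupport η), sSup (tsupport η), (h.supp (hk.sInf_mem hne)).1,
        (h.supp (hk.sSup_mem hne)).2, fun t ht => ⟨csInf_le hk.bddBelow ht, le_csSup hk.bddAbove ht⟩⟩
  have hsup : tsupport β ⊆ Icc c d := by
    refine closure_minimal ?_ isClosed_Icc
    intro t ht
    by_contra hcon
    apply ht
    have hz : ∀ r, r ∉ Icc c d → η r = 0 := fun r hr =>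
      image_eq_zero_of_notMem_tsupport fun hh => hr (hcd hh)
    rcases lt_or_ge t c with htc | htc
    · change ∫ r in a..t, η r = 0
      rw [intervalIntegral.integral_congr (g := fun _ => (0:ℝ))]
      · simp
      · intro r hr
        apply hz
        intro hr'
        rcases mem_uIcc.1 hr with h1 | h1 <;> linarith [h1.1, h1.2, hr'.1]
    · have htd : d < t := by
        by_contra hh
        exact hcon ⟨htc, not_lt.1 hh⟩
      have e1 : ∫ r in a..b, η r = 0 := by
        rw [intervalIntegral.integral_of_le hab.le, integral_Ioc_eq_integral_Ioo, h0]
      have e2 : ∫ r in t..b, η r = 0 := by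
        rw [intervalIntegral.integral_congr (g := fun _ => (0:ℝ))]
        · simp
        · intro r hr
          apply hz
          intro hr'
          rcases mem_uIcc.1 hr with h1 | h1 <;> linarith [h1.1, h1.2, hr'.2]
      have e3 := intervalIntegral.integral_add_adjacent_intervals
        (h.continuous.intervalIntegrable a t) (h.continuous.intervalIntegrable t b) (μ := volume)
      change ∫ r in a..t, η r = 0
      linarith
  refine ⟨β, ⟨?_, ?_, ?_⟩, fun t => (hd t).deriv⟩
  · rw [contDiff_infty_iff_deriv]
    exact ⟨fun t => (hd t).differentiableAt, by rw [hder]; exact h.smooth⟩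
  · exact isCompact_Icc.of_isClosed_subset isClosed_closure hsup
  · exact fun t ht => ⟨lt_of_lt_of_le hac (hsup ht).1, lt_of_le_of_lt (hsup ht).2 hdb⟩

/-- fundamental lemma in one dimension -/
lemma ae_zero_1d {a b : ℝ} {f : ℝ → ℝ} (hf : IntegrableOn f (Ioo a b))
    (h : ∀ φ, Tst_s15 a b φ → ∫ t in Ioo a b, f t * φ t = 0) :
    ∀ᵐ t ∂(volume.restrict (Ioo a b)), f t = 0 := by
  rw [ae_restrict_iff' measurableSet_Ioo]
  refine isOpen_Ioo.ae_eq_zero_of_integral_contDiff_smul_eq_zero hf.locallyIntegrableOn ?_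
  intro g h1 h2 h3
  have ht : Tst_s15 a b g := ⟨h1, h2, h3⟩
  rw [← h g ht]
  rw [setIntegral_eq_integral_of_forall_compl_eq_zero]
  · simp [mul_comm]
  · intro t ht'; simp [ht.eq_zero ht']

lemma const_pairing {a b : ℝ} (hab : a < b) {f : ℝ → ℝ} (hf : IntegrableOn f (Ioo a b))
    (h : ∀ φ, Tst_s15 a b φ → ∫ t in Ioo a b, f t * deriv φ t = 0)
    {β : ℝ → ℝ} (hβ : Tst_s15 a b β) (hβ1 : ∫ t in Ioo a b, β t = 1)
    {η : ℝ → ℝ} (hη : Tst_s15 a b η) :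
    ∫ t in Ioo a b, f t * η t = (∫ t in Ioo a b, η t) * ∫ t in Ioo a b, f t * β t := by
  set m := ∫ t in Ioo a b, η t with hm
  obtain ⟨B, hB, hB'⟩ := (hη.sub_smul hβ m).primitive hab (by
    rw [integral_sub hη.integrable.integrableOn (hβ.integrable.const_mul m).integrableOn,
      integral_const_mul, hβ1, ← hm]; ring)
  have := h B hB
  simp_rw [hB'] at this
  have e : ∀ t, f t * (η t - m * β t) = f t * η t - m * (f t * β t) := fun t => by ring
  simp_rw [e] at this
  rw [integral_sub (hη.mul_int hf) ((hβ.mul_int hf).const_mul m), integral_const_mul] at this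
  linarith

lemma const_of_weak {a b : ℝ} (hab : a < b) {f : ℝ → ℝ} (hf : IntegrableOn f (Ioo a b))
    (h : ∀ φ, Tst_s15 a b φ → ∫ t in Ioo a b, f t * deriv φ t = 0) :
    ∃ c, ∀ᵐ t ∂(volume.restrict (Ioo a b)), f t = c := by
  obtain ⟨β, hβ, hβ1⟩ := exists_tst hab
  set c := ∫ t in Ioo a b, f t * β t
  refine ⟨c, ?_⟩
  have hc : IntegrableOn (fun _ : ℝ => c) (Ioo a b) := by simp
  have := ae_zero_1d (hf.sub hc) (fun η hη => by
    have e : ∀ t, (f - fun _ : ℝ => c) t * η t = f t * η t - c * η t := fun t => by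
      simp only [Pi.sub_apply]; ring
    simp_rw [e]
    rw [integral_sub (hη.mul_int hf) (hη.integrable.const_mul c).integrableOn, integral_const_mul,
      const_pairing hab hf h hβ hβ1 hη]
    ring)
  filter_upwards [this] with t ht
  simpa [sub_eq_zero] using ht

lemma IsAC.intble {a b : ℝ} {f g : ℝ → ℝ} (hab : a < b) (h : IsAC f g a b) :
    IntervalIntegrable g volume a b := by
  rw [intervalIntegrable_iff_integrableOn_Ioo_of_le hab.le]; exact h.int

lemma IsAC.ext {a b : ℝ} (hab : a < b) {f g : ℝ → ℝ} (h : IsAC f g a b) :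
    ∃ F, AbsolutelyContinuousOnInterval F a b ∧ (∀ t ∈ Ioo a b, F t = f t) ∧
      ∀ᵐ t, t ∈ Ioo a b → HasDerivAt F (g t) t := by
  have hm : (a + b) / 2 ∈ Ioo a b := by constructor <;> linarith
  have hi := h.intble hab
  have hm' : (a + b) / 2 ∈ uIcc a b := by
    rw [uIcc_of_le hab.le]; exact Ioo_subset_Icc_self hm
  refine ⟨fun t => f ((a+b)/2) + ∫ r in ((a+b)/2)..t, g r, ?_, ?_, ?_⟩
  · refine AbsolutelyContinuousOnInterval.add ?_
      (hi.absolutelyContinuousOnInterval_intervalIntegral hm')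
    exact ((contDiff_const (n := 1)).contDiffOn).absolutelyContinuousOnInterval
  · intro t ht
    simp only [← h.eq _ hm t ht]; ring
  · filter_upwards [hi.ae_hasDerivAt_integral] with t ht htt
    rw [uIcc_of_le hab.le] at ht
    exact (ht (Ioo_subset_Icc_self htt) _ (Ioo_subset_Icc_self hm)).const_add _

lemma IsAC.integrable {a b : ℝ} (hab : a < b) {f g : ℝ → ℝ} (h : IsAC f g a b) :
    IntegrableOn f (Ioo a b) := by
  obtain ⟨F, hF, he, -⟩ := h.ext hab
  have hc := hF.continuousOn
  rw [uIcc_of_le hab.le] at hc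
  exact ((hc.integrableOn_Icc).mono_set Ioo_subset_Icc_self).congr_fun he measurableSet_Ioo

lemma IsAC.ibp {a b : ℝ} (hab : a < b) {f g : ℝ → ℝ} (h : IsAC f g a b) {φ : ℝ → ℝ}
    (hφ : Tst_s15 a b φ) :
    ∫ t in Ioo a b, f t * deriv φ t = - ∫ t in Ioo a b, φ t * g t := by
  obtain ⟨F, hF, he, hd⟩ := h.ext hab
  have hφ' : AbsolutelyContinuousOnInterval φ a b :=
    ((hφ.smooth.of_le (m := 1) (by exact_mod_cast le_top)).contDiffOn).absolutelyContinuousOnInterval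
  have := hF.integral_mul_deriv_eq_deriv_mul hφ'
  rw [hφ.eq_zero (t := a) (by simp), hφ.eq_zero (t := b) (by simp)] at this
  rw [intervalIntegral.integral_of_le hab.le, intervalIntegral.integral_of_le hab.le,
    integral_Ioc_eq_integral_Ioo, integral_Ioc_eq_integral_Ioo] at this
  rw [setIntegral_congr_fun (g := fun t => F t * deriv φ t) measurableSet_Ioo
    (fun t ht => by simp only [he t ht]), this]
  simp only [mul_zero, sub_zero, zero_sub, neg_inj]
  refine setIntegral_congr_ae measurableSet_Ioo ?_
  filter_upwards [hd] with t ht htt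
  rw [(ht htt).deriv, mul_comm]

lemma isAC_of_weak {a b : ℝ} (hab : a < b) {f g : ℝ → ℝ} (hf : IntegrableOn f (Ioo a b))
    (hg : IntegrableOn g (Ioo a b))
    (h : ∀ φ, Tst_s15 a b φ → ∫ t in Ioo a b, f t * deriv φ t = - ∫ t in Ioo a b, φ t * g t) :
    ∃ F, IsAC F g a b ∧ ∀ᵐ t ∂(volume.restrict (Ioo a b)), f t = F t := by
  have hi : IntervalIntegrable g volume a b := by
    rw [intervalIntegrable_iff_integrableOn_Ioo_of_le hab.le]; exact hg
  let G : ℝ → ℝ := fun t => ∫ r in a..t, g r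
  have hsub : ∀ t ∈ Ioo a b, IntervalIntegrable g volume a t := fun t ht =>
    hi.mono_set (by rw [uIcc_of_le hab.le, uIcc_of_le ht.1.le]; exact Icc_subset_Icc_right ht.2.le)
  have hG : IsAC G g a b := ⟨hg, fun s hs t ht =>
    intervalIntegral.integral_interval_sub_left (hsub t ht) (hsub s hs)⟩
  obtain ⟨c, hc⟩ := const_of_weak hab (hf.sub (hG.integrable hab)) (fun φ hφ => by
    have e : ∀ t, (f - G) t * deriv φ t = f t * deriv φ t - G t * deriv φ t := fun t => by
      simp only [Pi.sub_apply]; ring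
    simp_rw [e]
    rw [integral_sub (hφ.deriv.mul_int hf) (hφ.deriv.mul_int (hG.integrable hab)), h φ hφ,
      hG.ibp hab hφ]
    ring)
  refine ⟨fun t => G t + c, ⟨hg, fun s hs t ht => ?_⟩, ?_⟩
  · rw [← hG.eq s hs t ht]; ring
  · filter_upwards [hc] with t ht
    simp only [Pi.sub_apply] at ht
    linarith

/-- the first marginal measure -/
abbrev muX : Measure ℝ := volume.restrict (Ioo (0:ℝ) 1)
/-- the second marginal measure -/
abbrev muY : Measure ℝ := volume.restrict (Ioo (-1:ℝ) 1)
/-- Lebesgue measure on the rectangle -/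
abbrev muR : Measure V2 := volume.restrict Rect

lemma rect_mp : MeasurePreserving (MeasurableEquiv.finTwoArrow (α := ℝ)) muR (muX.prod muY) := by
  have h := (volume_preserving_finTwoArrow ℝ).restrict_preimage
    (measurableSet_Ioo.prod measurableSet_Ioo) (s := Ioo (0:ℝ) 1 ×ˢ Ioo (-1:ℝ) 1)
  rw [Measure.prod_restrict]
  exact h

lemma vec_eta (x : V2) : ![x 0, x 1] = x := by
  ext i; fin_cases i <;> rfl

lemma rect_integral (F : V2 → ℝ) : ∫ x in Rect, F x = ∫ z, F ![z.1, z.2] ∂(muX.prod muY) := by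
  rw [← rect_mp.integral_comp (MeasurableEquiv.measurableEmbedding _)]
  simp [MeasurableEquiv.finTwoArrow, MeasurableEquiv.piFinTwo, vec_eta]

lemma rect_integrable (F : V2 → ℝ) :
    IntegrableOn F Rect ↔ Integrable (fun z : ℝ × ℝ => F ![z.1, z.2]) (muX.prod muY) := by
  rw [← rect_mp.integrable_comp_emb (MeasurableEquiv.measurableEmbedding _)]
  simp [MeasurableEquiv.finTwoArrow, MeasurableEquiv.piFinTwo, vec_eta, Function.comp_def,
    IntegrableOn]

lemma rect_ae (P : V2 → Prop) :
    (∀ᵐ x ∂muR, P x) ↔ ∀ᵐ z ∂(muX.prod muY), P ![z.1, z.2] := by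
  rw [← rect_mp.map_eq, (MeasurableEquiv.measurableEmbedding _).ae_map_iff]
  simp [MeasurableEquiv.finTwoArrow, MeasurableEquiv.piFinTwo, vec_eta]

lemma rect_open : IsOpen Rect :=
  (isOpen_Ioo.preimage (continuous_apply 0)).inter (isOpen_Ioo.preimage (continuous_apply 1))

instance : IsFiniteMeasure muR := by
  constructor
  have h := rect_mp.measure_preimage (s := univ) MeasurableSet.univ.nullMeasurableSet
  rw [preimage_univ] at h
  rw [h]; exact measure_lt_top _ _

/-- test functions on the rectangle -/
structure Tst2 (φ : V2 → ℝ) : Prop where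
  smooth : ContDiff ℝ (⊤ : ℕ∞) φ
  cpt : HasCompactSupport φ
  supp : tsupport φ ⊆ Rect

/-- scalar weak partial derivative on the rectangle -/
structure WD (j : Fin 2) (f g : V2 → ℝ) : Prop where
  intf : IntegrableOn f Rect
  intg : IntegrableOn g Rect
  ibp : ∀ φ, Tst2 φ → ∫ x in Rect, f x * pd j φ x = - ∫ x in Rect, φ x * g x

lemma Tst2.pd_cont {φ : V2 → ℝ} (h : Tst2 φ) (j : Fin 2) : Continuous (pd j φ) :=
  (h.smooth.continuous_fderiv (by simp)).clm_apply continuous_const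

lemma Tst2.pd_cpt {φ : V2 → ℝ} (h : Tst2 φ) (j : Fin 2) : HasCompactSupport (pd j φ) := by
  refine h.cpt.fderiv (𝕜 := ℝ) |>.comp_left (g := fun L : V2 →L[ℝ] ℝ => L (Pi.single j 1)) (by simp)

lemma Tst2.mul_int {φ : V2 → ℝ} (h : Tst2 φ) {f : V2 → ℝ} {σ : Measure V2}
    (hf : Integrable f σ) : Integrable (fun x => f x * φ x) σ := by
  obtain ⟨C, hC⟩ := h.smooth.continuous.bounded_above_of_compact_support h.cpt
  exact hf.mul_bdd (c := C) h.smooth.continuous.aestronglyMeasurable (Eventually.of_forall hC)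

lemma Tst2.mul_int' {φ : V2 → ℝ} (h : Tst2 φ) {f : V2 → ℝ} {σ : Measure V2}
    (hf : Integrable f σ) : Integrable (fun x => φ x * f x) σ := by
  simpa [mul_comm] using h.mul_int hf

lemma Tst2.mul_pd_int {φ : V2 → ℝ} (h : Tst2 φ) (j : Fin 2) {f : V2 → ℝ} {σ : Measure V2}
    (hf : Integrable f σ) : Integrable (fun x => f x * pd j φ x) σ := by
  obtain ⟨C, hC⟩ := (h.pd_cont j).bounded_above_of_compact_support (h.pd_cpt j)
  exact hf.mul_bdd (c := C) (h.pd_cont j).aestronglyMeasurable (Eventually.of_forall hC)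

lemma WD.congr {j : Fin 2} {f g f' : V2 → ℝ} (h : WD j f g) (hf : ∀ᵐ x ∂muR, f x = f' x) :
    WD j f' g := by
  refine ⟨h.intf.congr hf, h.intg, fun φ hφ => ?_⟩
  rw [← h.ibp φ hφ]
  refine integral_congr_ae ?_
  filter_upwards [hf] with x hx
  rw [hx]

lemma WD.add {j : Fin 2} {f g f' g' : V2 → ℝ} (h : WD j f g) (h' : WD j f' g') :
    WD j (fun x => f x + f' x) (fun x => g x + g' x) := by
  refine ⟨h.intf.add h'.intf, h.intg.add h'.intg, fun φ hφ => ?_⟩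
  simp_rw [add_mul, mul_add]
  rw [integral_add (hφ.mul_pd_int j h.intf) (hφ.mul_pd_int j h'.intf), h.ibp φ hφ, h'.ibp φ hφ,
    integral_add (hφ.mul_int' h.intg) (hφ.mul_int' h'.intg)]
  ring

lemma WD.smul {j : Fin 2} {f g : V2 → ℝ} (h : WD j f g) (c : ℝ) :
    WD j (fun x => c * f x) (fun x => c * g x) := by
  refine ⟨h.intf.const_mul c, h.intg.const_mul c, fun φ hφ => ?_⟩
  have e : ∀ x, φ x * (c * g x) = c * (φ x * g x) := fun x => by ring
  simp_rw [mul_assoc, e]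
  rw [integral_const_mul, integral_const_mul, h.ibp φ hφ]
  ring

/-- Du Bois-Reymond on the rectangle with a singular measure. -/
lemma sing_unique {h k : V2 → ℝ} {σ : Measure V2} [IsFiniteMeasure σ]
    (hh : IntegrableOn h Rect) (hk : Integrable k σ) (hs : σ ⟂ₘ (volume : Measure V2))
    (H : ∀ φ, Tst2 φ → ∫ x in Rect, φ x * h x = ∫ x, φ x * k x ∂σ) :
    ∀ᵐ x ∂muR, h x = 0 := by
  obtain ⟨N, hN, hN1, hN2⟩ := hs
  classical
  let F : V2 → ℝ := fun x => if x ∈ N then h x else - k x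
  have hNae : ∀ᵐ x ∂muR, x ∈ N := by
    refine ae_restrict_of_ae ?_
    rw [ae_iff]; exact hN2
  have hσae : ∀ᵐ x ∂σ, x ∉ N := by
    rw [ae_iff]; simpa using hN1
  have hF1 : ∀ᵐ x ∂muR, h x = F x := by
    filter_upwards [hNae] with x hx; simp [F, hx]
  have hF2 : ∀ᵐ x ∂σ, - k x = F x := by
    filter_upwards [hσae] with x hx; simp [F, hx]
  have hi1 : Integrable F muR := Integrable.congr hh hF1
  have hi2 : Integrable F σ := hk.neg.congr hF2
  have hi : Integrable F (muR + σ) := hi1.add_measure hi2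
  have key := rect_open.ae_eq_zero_of_integral_contDiff_smul_eq_zero (μ := muR + σ)
    (hi.locallyIntegrable.locallyIntegrableOn _) (fun φ h1 h2 h3 => by
      have hφ : Tst2 φ := ⟨h1, h2, h3⟩
      simp only [smul_eq_mul]
      rw [integral_add_measure (hφ.mul_int' hi1) (hφ.mul_int' hi2)]
      have e1 : ∫ x, φ x * F x ∂muR = ∫ x in Rect, φ x * h x := by
        refine integral_congr_ae ?_
        filter_upwards [hF1] with x hx; rw [hx]
      have e2 : ∫ x, φ x * F x ∂σ = - ∫ x, φ x * k x ∂σ := by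
        rw [← integral_neg]
        refine integral_congr_ae ?_
        filter_upwards [hF2] with x hx; rw [← hx]; ring
      rw [e1, e2, H φ hφ]; ring)
  rw [ae_add_measure_iff] at key
  have hR : ∀ᵐ x ∂muR, x ∈ Rect := ae_restrict_mem rect_open.measurableSet
  filter_upwards [key.1, hF1, hR] with x h1 h2 h3
  rw [h2, h1 h3]

lemma WD.unique {j : Fin 2} {f g g' : V2 → ℝ} (h : WD j f g) (h' : WD j f g') :
    ∀ᵐ x ∂muR, g x = g' x := by
  have := sing_unique (h := fun x => g x - g' x) (k := 0) (σ := 0) (h.intg.sub h'.intg) (by simp)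
    Measure.MutuallySingular.zero_left (fun φ hφ => by
      simp_rw [mul_sub]
      rw [integral_sub (hφ.mul_int' h.intg) (hφ.mul_int' h'.intg)]
      have := h.ibp φ hφ
      rw [h'.ibp φ hφ] at this
      simp; linarith)
  filter_upwards [this] with x hx
  linarith

lemma hasDerivAt_vec0 (s t : ℝ) : HasDerivAt (fun s : ℝ => (![s, t] : V2)) (Pi.single 0 1) s := by
  rw [hasDerivAt_pi]
  intro i
  fin_cases i
  · simpa using hasDerivAt_id' s
  · simpa using hasDerivAt_const s t

lemma hasDerivAt_vec1 (s t : ℝ) : HasDerivAt (fun t : ℝ => (![s, t] : V2)) (Pi.single 1 1) t := by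
  rw [hasDerivAt_pi]
  intro i
  fin_cases i
  · simpa using hasDerivAt_const t s
  · simpa using hasDerivAt_id' t

lemma contDiff_vec0 (t : ℝ) : ContDiff ℝ (⊤ : ℕ∞) (fun s : ℝ => (![s, t] : V2)) := by
  rw [contDiff_pi]
  intro i
  fin_cases i
  · simpa using contDiff_fun_id
  · simpa using contDiff_const

lemma contDiff_vec1 (s : ℝ) : ContDiff ℝ (⊤ : ℕ∞) (fun t : ℝ => (![s, t] : V2)) := by
  rw [contDiff_pi]
  intro i
  fin_cases i
  · simpa using contDiff_const
  · simpa using contDiff_fun_id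

lemma Tst2.slice1 {φ : V2 → ℝ} (h : Tst2 φ) (s : ℝ) :
    Tst_s15 (-1) 1 (fun t => φ ![s, t]) ∧ ∀ t, deriv (fun t => φ ![s, t]) t = pd 1 φ ![s, t] := by
  have hs : tsupport (fun t => φ ![s, t]) ⊆ (fun t : ℝ => (![s, t] : V2)) ⁻¹' tsupport φ :=
    tsupport_comp_subset_preimage φ (contDiff_vec1 s).continuous
  refine ⟨⟨h.smooth.comp (contDiff_vec1 s), ?_, fun t ht => ?_⟩, fun t => ?_⟩
  · have hc : IsCompact ((fun x : V2 => x 1) '' tsupport φ) := h.cpt.isCompact.image (continuous_apply 1)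
    exact hc.of_isClosed_subset isClosed_closure fun t ht => ⟨_, hs ht, by simp⟩
  · simpa using (h.supp (hs ht)).2
  · have := ((h.smooth.differentiable (by simp)) ![s, t]).hasFDerivAt.comp_hasDerivAt t
      (hasDerivAt_vec1 s t)
    exact this.deriv

lemma Tst2.slice0 {φ : V2 → ℝ} (h : Tst2 φ) (t : ℝ) :
    Tst_s15 0 1 (fun s => φ ![s, t]) ∧ ∀ s, deriv (fun s => φ ![s, t]) s = pd 0 φ ![s, t] := by
  have hs : tsupport (fun s => φ ![s, t]) ⊆ (fun s : ℝ => (![s, t] : V2)) ⁻¹' tsupport φ :=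
    tsupport_comp_subset_preimage φ (contDiff_vec0 t).continuous
  refine ⟨⟨h.smooth.comp (contDiff_vec0 t), ?_, fun s ht => ?_⟩, fun s => ?_⟩
  · have hc : IsCompact ((fun x : V2 => x 0) '' tsupport φ) := h.cpt.isCompact.image (continuous_apply 0)
    exact hc.of_isClosed_subset isClosed_closure fun t ht => ⟨_, hs ht, by simp⟩
  · simpa using (h.supp (hs ht)).1
  · have := ((h.smooth.differentiable (by simp)) ![s, t]).hasFDerivAt.comp_hasDerivAt s
      (hasDerivAt_vec0 s t)
    exact this.deriv

lemma tensor_tst {α β : ℝ → ℝ} (hα : Tst_s15 0 1 α) (hβ : Tst_s15 (-1) 1 β) :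
    Tst2 (fun x => α (x 0) * β (x 1)) := by
  have hsub : tsupport (fun x : V2 => α (x 0) * β (x 1)) ⊆
      {x | x 0 ∈ tsupport α ∧ x 1 ∈ tsupport β} := by
    refine closure_minimal ?_ ?_
    · intro x hx
      exact ⟨subset_tsupport _ (left_ne_zero_of_mul hx), subset_tsupport _ (right_ne_zero_of_mul hx)⟩
    · exact (isClosed_closure.preimage (continuous_apply 0)).inter
        (isClosed_closure.preimage (continuous_apply 1))
  refine ⟨?_, ?_, fun x hx => ⟨hα.supp (hsub hx).1, hβ.supp (hsub hx).2⟩⟩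
  · exact (hα.smooth.comp (contDiff_apply ℝ ℝ 0)).mul (hβ.smooth.comp (contDiff_apply ℝ ℝ 1))
  · have hc : IsCompact ((fun z : ℝ × ℝ => (![z.1, z.2] : V2)) '' (tsupport α ×ˢ tsupport β)) := by
      refine (hα.cpt.isCompact.prod hβ.cpt.isCompact).image ?_
      refine continuous_pi fun i => ?_
      fin_cases i
      · exact continuous_fst
      · exact continuous_snd
    exact hc.of_isClosed_subset isClosed_closure fun x hx => ⟨(x 0, x 1), hsub hx, vec_eta x⟩

lemma tensor_pd0 {α β : ℝ → ℝ} (hα : Tst_s15 0 1 α) (hβ : Tst_s15 (-1) 1 β) (s t : ℝ) :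
    pd 0 (fun x => α (x 0) * β (x 1)) ![s, t] = deriv α s * β t := by
  rw [← ((tensor_tst hα hβ).slice0 t).2 s]
  simp

lemma tensor_pd1 {α β : ℝ → ℝ} (hα : Tst_s15 0 1 α) (hβ : Tst_s15 (-1) 1 β) (s t : ℝ) :
    pd 1 (fun x => α (x 0) * β (x 1)) ![s, t] = α s * deriv β t := by
  rw [← ((tensor_tst hα hβ).slice1 s).2 t]
  simp

lemma prod_int {a f : ℝ → ℝ} (ha : IntegrableOn a (Ioo 0 1)) (hf : IntegrableOn f (Ioo (-1) 1)) :
    IntegrableOn (fun x : V2 => a (x 0) * f (x 1)) Rect := by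
  rw [rect_integrable]
  exact Integrable.mul_prod ha hf

lemma prod_WD1 {a f f' : ℝ → ℝ} (ha : IntegrableOn a (Ioo 0 1)) (hf : IsAC f f' (-1) 1) :
    WD 1 (fun x => a (x 0) * f (x 1)) (fun x => a (x 0) * f' (x 1)) := by
  have i1 := prod_int ha (hf.integrable (by norm_num))
  have i2 := prod_int ha hf.int
  refine ⟨i1, i2, fun φ hφ => ?_⟩
  rw [rect_integral, rect_integral, integral_prod _ ((rect_integrable _).1 (hφ.mul_pd_int 1 i1)),
    integral_prod _ ((rect_integrable _).1 (hφ.mul_int' i2)), ← integral_neg]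
  refine integral_congr_ae (Eventually.of_forall fun s => ?_)
  have := hf.ibp (by norm_num) (hφ.slice1 s).1
  simp_rw [(hφ.slice1 s).2] at this
  have e1 : ∀ t, a s * f t * pd 1 φ ![s, t] = a s * (f t * pd 1 φ ![s, t]) := fun t => by ring
  have e2 : ∀ t, φ ![s, t] * (a s * f' t) = a s * (φ ![s, t] * f' t) := fun t => by ring
  simp only [Matrix.cons_val_zero, Matrix.cons_val_one, e1, e2]
  rw [integral_const_mul, integral_const_mul, this]
  ring

lemma prod_WD0 {a a' f : ℝ → ℝ} (ha : IsAC a a' 0 1) (hf : IntegrableOn f (Ioo (-1) 1)) :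
    WD 0 (fun x => a (x 0) * f (x 1)) (fun x => a' (x 0) * f (x 1)) := by
  have i1 := prod_int (ha.integrable (by norm_num)) hf
  have i2 := prod_int ha.int hf
  refine ⟨i1, i2, fun φ hφ => ?_⟩
  rw [rect_integral, rect_integral,
    integral_prod_symm _ ((rect_integrable _).1 (hφ.mul_pd_int 0 i1)),
    integral_prod_symm _ ((rect_integrable _).1 (hφ.mul_int' i2)), ← integral_neg]
  refine integral_congr_ae (Eventually.of_forall fun t => ?_)
  have := ha.ibp (by norm_num) (hφ.slice0 t).1
  simp_rw [(hφ.slice0 t).2] at this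
  have e1 : ∀ s, a s * f t * pd 0 φ ![s, t] = f t * (a s * pd 0 φ ![s, t]) := fun t => by ring
  have e2 : ∀ s, φ ![s, t] * (a' s * f t) = f t * (φ ![s, t] * a' s) := fun t => by ring
  simp only [Matrix.cons_val_zero, Matrix.cons_val_one, e1, e2]
  rw [integral_const_mul, integral_const_mul, this]
  ring

/-- pairing of `w` with `α` in the first variable -/
lemma pair0_int {w : V2 → ℝ} (hw : IntegrableOn w Rect) {α : ℝ → ℝ} (hα : Tst_s15 0 1 α) :
    Integrable (fun z : ℝ × ℝ => w ![z.1, z.2] * α z.1) (muX.prod muY) := by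
  obtain ⟨C, hC⟩ := hα.exists_bound
  exact ((rect_integrable w).1 hw).mul_bdd (c := C)
    (hα.continuous.comp continuous_fst).aestronglyMeasurable (Eventually.of_forall fun z => hC _)

lemma pair1_int {w : V2 → ℝ} (hw : IntegrableOn w Rect) {β : ℝ → ℝ} (hβ : Tst_s15 (-1) 1 β) :
    Integrable (fun z : ℝ × ℝ => w ![z.1, z.2] * β z.2) (muX.prod muY) := by
  obtain ⟨C, hC⟩ := hβ.exists_bound
  exact ((rect_integrable w).1 hw).mul_bdd (c := C)
    (hβ.continuous.comp continuous_snd).aestronglyMeasurable (Eventually.of_forall fun z => hC _)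

lemma pair_eq0 {w : V2 → ℝ} (hw : IntegrableOn w Rect) {α : ℝ → ℝ} (hα : Tst_s15 0 1 α) {β : ℝ → ℝ}
    (hβ : Continuous β) (hb : ∃ C, ∀ t, ‖β t‖ ≤ C) :
    ∫ z, w ![z.1, z.2] * (α z.1 * β z.2) ∂(muX.prod muY) =
      ∫ t, (∫ s, w ![s, t] * α s ∂muX) * β t ∂muY := by
  obtain ⟨C, hC⟩ := hb
  have hi : Integrable (fun z : ℝ × ℝ => w ![z.1, z.2] * (α z.1 * β z.2)) (muX.prod muY) := by
    simp_rw [← mul_assoc]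
    exact (pair0_int hw hα).mul_bdd (c := C)
      (hβ.comp continuous_snd).aestronglyMeasurable (Eventually.of_forall fun z => hC _)
  rw [integral_prod_symm _ hi]
  simp_rw [← mul_assoc, integral_mul_const]

lemma pair_eq1 {w : V2 → ℝ} (hw : IntegrableOn w Rect) {β : ℝ → ℝ} (hβ : Tst_s15 (-1) 1 β) {α : ℝ → ℝ}
    (hα : Continuous α) (ha : ∃ C, ∀ t, ‖α t‖ ≤ C) :
    ∫ z, w ![z.1, z.2] * (α z.1 * β z.2) ∂(muX.prod muY) =
      ∫ s, (∫ t, w ![s, t] * β t ∂muY) * α s ∂muX := by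
  obtain ⟨C, hC⟩ := ha
  have e : ∀ z : ℝ × ℝ, w ![z.1, z.2] * (α z.1 * β z.2) = w ![z.1, z.2] * β z.2 * α z.1 :=
    fun z => by ring
  simp_rw [e]
  have hi : Integrable (fun z : ℝ × ℝ => w ![z.1, z.2] * β z.2 * α z.1) (muX.prod muY) :=
    (pair1_int hw hβ).mul_bdd (c := C)
      (hα.comp continuous_fst).aestronglyMeasurable (Eventually.of_forall fun z => hC _)
  rw [integral_prod _ hi]
  simp_rw [integral_mul_const]

/-- orthogonality to all tensor products -/
lemma ae_zero_tensor {v : V2 → ℝ} (hv : IntegrableOn v Rect)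
    (h : ∀ α β, Tst_s15 0 1 α → Tst_s15 (-1) 1 β →
      ∫ z, v ![z.1, z.2] * (α z.1 * β z.2) ∂(muX.prod muY) = 0) : ∀ᵐ x ∂muR, v x = 0 := by
  set V : ℝ × ℝ → ℝ := fun z => v ![z.1, z.2] with hV
  have hVi : Integrable V (muX.prod muY) := (rect_integrable v).1 hv
  have step1 : ∀ β, Tst_s15 (-1) 1 β → ∀ᵐ s ∂muX, ∫ t, v ![s, t] * β t ∂muY = 0 := by
    intro β hβ
    refine ae_zero_1d (pair1_int hv hβ).integral_prod_left fun α hα => ?_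
    rw [← pair_eq1 hv hβ hα.continuous hα.exists_bound]
    exact h α β hα hβ
  have step2 : ∀ I : Set ℝ, MeasurableSet I → ∀ᵐ t ∂muY, ∫ s in I, v ![s, t] ∂muX = 0 := by
    intro I hI
    have hle : (muX.restrict I).prod muY ≤ muX.prod muY := by
      have : (muX.restrict I).prod muY = (muX.prod muY).restrict (I ×ˢ univ) := by
        rw [← Measure.prod_restrict, Measure.restrict_univ]
      rw [this]; exact Measure.restrict_le_self
    refine ae_zero_1d (hVi.mono_measure hle).integral_prod_right fun β hβ => ?_
    simp_rw [← integral_mul_const]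
    rw [← integral_prod_symm (f := fun z : ℝ × ℝ => v ![z.1, z.2] * β z.2)
      ((pair1_int hv hβ).mono_measure hle),
      integral_prod (f := fun z : ℝ × ℝ => v ![z.1, z.2] * β z.2)
      ((pair1_int hv hβ).mono_measure hle)]
    rw [integral_eq_zero_of_ae]
    exact ae_restrict_of_ae (step1 β hβ)
  have step3 : ∀ I J : Set ℝ, MeasurableSet I → MeasurableSet J →
      ∫ z in I ×ˢ J, V z ∂(muX.prod muY) = 0 := by
    intro I J hI hJ
    rw [← Measure.prod_restrict, integral_prod_symm]
    · rw [integral_eq_zero_of_ae]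
      exact ae_restrict_of_ae (step2 I hI)
    · rw [Measure.prod_restrict]; exact hVi.integrableOn
  have hmeas : ((muX.prod muY).withDensity fun z => ENNReal.ofReal (V z)) =
      (muX.prod muY).withDensity fun z => ENNReal.ofReal (-V z) := by
    have hfin : IsFiniteMeasure ((muX.prod muY).withDensity fun z => ENNReal.ofReal (V z)) :=
      isFiniteMeasure_withDensity_ofReal hVi.2
    refine Measure.ext_prod fun {I J} hI hJ => ?_
    rw [withDensity_apply _ (hI.prod hJ), withDensity_apply _ (hI.prod hJ)]
    have h0 := step3 I J hI hJ
    have hVo : Integrable V ((muX.prod muY).restrict (I ×ˢ J)) := hVi.integrableOn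
    rw [integral_eq_lintegral_pos_part_sub_lintegral_neg_part hVo, sub_eq_zero] at h0
    refine (ENNReal.toReal_eq_toReal_iff' ?_ ?_).1 h0
    · exact (hVo.lintegral_lt_top).ne
    · exact (hVo.neg.lintegral_lt_top).ne
  have hall : V =ᵐ[muX.prod muY] 0 := by
    refine hVi.ae_eq_zero_of_forall_setIntegral_eq_zero fun S hS _ => ?_
    have hVo : Integrable V ((muX.prod muY).restrict S) := hVi.integrableOn
    rw [integral_eq_lintegral_pos_part_sub_lintegral_neg_part hVo,
      ← withDensity_apply _ hS, ← withDensity_apply _ hS, hmeas, sub_self]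
  rw [rect_ae]
  exact hall

lemma const_2d {w : V2 → ℝ} (h0 : WD 0 w fun _ => 0) (h1 : WD 1 w fun _ => 0) :
    ∃ c, ∀ᵐ x ∂muR, w x = c := by
  have hw := h0.intf
  obtain ⟨α0, hα0, hα01⟩ := exists_tst (show (0:ℝ) < 1 by norm_num)
  obtain ⟨β0, hβ0, hβ01⟩ := exists_tst (show (-1:ℝ) < 1 by norm_num)
  set c := ∫ z, w ![z.1, z.2] * (α0 z.1 * β0 z.2) ∂(muX.prod muY) with hc
  have key : ∀ α β, Tst_s15 0 1 α → Tst_s15 (-1) 1 β →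
      ∫ z, w ![z.1, z.2] * (α z.1 * β z.2) ∂(muX.prod muY) =
        (∫ s, α s ∂muX) * (∫ t, β t ∂muY) * c := by
    intro α β hα hβ
    rw [pair_eq0 hw hα hβ.continuous hβ.exists_bound]
    rw [const_pairing (by norm_num) (pair0_int hw hα).integral_prod_right (fun B hB => ?_) hβ0 hβ01 hβ]
    · rw [← pair_eq0 hw hα hβ0.continuous hβ0.exists_bound,
        pair_eq1 hw hβ0 hα.continuous hα.exists_bound,
        const_pairing (by norm_num) (pair1_int hw hβ0).integral_prod_left (fun A hA => ?_)
          hα0 hα01 hα, ← pair_eq1 hw hβ0 hα0.continuous hα0.exists_bound]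
      · ring
      · rw [← pair_eq1 hw hβ0 hA.deriv.continuous hA.deriv.exists_bound]
        have := h0.ibp _ (tensor_tst hA hβ0)
        rw [rect_integral] at this
        simpa [tensor_pd0 hA hβ0] using this
    · rw [← pair_eq0 hw hα hB.deriv.continuous hB.deriv.exists_bound]
      have := h1.ibp _ (tensor_tst hα hB)
      rw [rect_integral] at this
      simpa [tensor_pd1 hα hB] using this
  refine ⟨c, ?_⟩
  have hci : IntegrableOn (fun _ : V2 => c) Rect := integrable_const c
  have := ae_zero_tensor (v := fun x => w x - c) (hw.sub hci) (fun α β hα hβ => by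
    simp_rw [sub_mul]
    have hab : Integrable (fun z : ℝ × ℝ => α z.1 * β z.2) (muX.prod muY) :=
      Integrable.mul_prod hα.integrable.integrableOn hβ.integrable.integrableOn
    have hwab : Integrable (fun z : ℝ × ℝ => w ![z.1, z.2] * (α z.1 * β z.2)) (muX.prod muY) := by
      have := (tensor_tst hα hβ).mul_int hw
      exact (rect_integrable _).1 this
    rw [integral_sub hwab (hab.const_mul c), key α β hα hβ, integral_const_mul, integral_prod_mul]
    ring)
  filter_upwards [this] with x hx
  linarith

lemma sob_iff {u : V2 → V2} {g : V2 → Mat2} :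
    IsSobolev11On Rect u g ↔ ∀ i j, WD j (fun x => u x i) (fun x => g x i j) := by
  constructor
  · intro h i j
    exact ⟨h.int_u.eval i, h.int_gu i j, fun φ hφ => h.ibp φ hφ.smooth hφ.cpt hφ.supp i j⟩
  · intro h
    exact ⟨Integrable.of_eval fun i => (h i 0).intf, fun i j => (h i j).intg,
      fun φ h1 h2 h3 i j => (h i j).ibp φ ⟨h1, h2, h3⟩⟩

lemma isAC_id (a b : ℝ) : IsAC (fun t => t) (fun _ => 1) a b :=
  ⟨integrableOn_const (by simp) , fun s _ t _ => by simp⟩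

lemma isAC_const (a b c : ℝ) : IsAC (fun _ => c) (fun _ => 0) a b :=
  ⟨integrableOn_const (by simp), fun s _ t _ => by simp⟩

lemma IsAC.ii {a b : ℝ} {f f' : ℝ → ℝ} (h : IsAC f f' a b) {s t : ℝ} (hs : s ∈ Ioo a b)
    (ht : t ∈ Ioo a b) : IntervalIntegrable f' volume s t := by
  have hab : a < b := hs.1.trans hs.2
  refine (h.intble hab).mono_set ?_
  rw [uIcc_of_le hab.le]
  exact uIcc_subset_Icc (Ioo_subset_Icc_self hs) (Ioo_subset_Icc_self ht)

lemma IsAC.add {a b : ℝ} {f f' k k' : ℝ → ℝ} (h : IsAC f f' a b) (h2 : IsAC k k' a b) :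
    IsAC (fun t => f t + k t) (fun t => f' t + k' t) a b := by
  refine ⟨h.int.add h2.int, fun s hs t ht => ?_⟩
  rw [intervalIntegral.integral_add (h.ii hs ht) (h2.ii hs ht), ← h.eq s hs t ht,
    ← h2.eq s hs t ht]
  ring

lemma IsAC.smul {a b : ℝ} {f f' : ℝ → ℝ} (h : IsAC f f' a b) (c : ℝ) :
    IsAC (fun t => c * f t) (fun t => c * f' t) a b := by
  refine ⟨h.int.const_mul c, fun s hs t ht => ?_⟩
  rw [intervalIntegral.integral_const_mul, ← h.eq s hs t ht]
  ring

lemma affine_WD0 {f f' k k' : ℝ → ℝ} (h : IsAC f f' (-1) 1) (h2 : IsAC k k' (-1) 1) :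
    WD 0 (fun x => x 0 * f (x 1) + k (x 1)) (fun x => f (x 1)) := by
  have h3 := (prod_WD0 (isAC_id 0 1) (h.integrable (by norm_num))).add
    (prod_WD0 (isAC_const 0 1 1) (h2.integrable (by norm_num)))
  simpa using h3

lemma affine_WD1 {f f' k k' : ℝ → ℝ} (h : IsAC f f' (-1) 1) (h2 : IsAC k k' (-1) 1) :
    WD 1 (fun x => x 0 * f (x 1) + k (x 1)) (fun x => x 0 * f' (x 1) + k' (x 1)) := by
  have h3 := (prod_WD1 ((isAC_id 0 1).integrable (by norm_num)) h).add
    (prod_WD1 ((isAC_const 0 1 1).integrable (by norm_num)) h2)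
  simpa using h3

lemma form_entry (R : Mat2) (c : ℝ) (i : Fin 2) :
    (R * (1 + c • outer e1 e2)) i 0 = R i 0 ∧
    (R * (1 + c • outer e1 e2)) i 1 = R i 1 + c * R i 0 := by
  constructor <;>
  simp [Matrix.mul_apply, Fin.sum_univ_two, outer, e1, e2] <;> ring

lemma form_vec (R : Mat2) (x : V2) (p : ℝ) (c : V2) (i : Fin 2) :
    (R.mulVec x + p • R.mulVec e1 + c) i
      = x 0 * R i 0 + (R i 1 * x 1 + R i 0 * p + c i) := by
  fin_cases i <;> simp [e1] <;> ring

lemma sob_of_form (R : Mat2) {θ γ : ℝ → ℝ} (h : IsAC θ γ (-1) 1) (c : V2) :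
    IsSobolev11On Rect (fun x => R.mulVec x + θ (x 1) • R.mulVec e1 + c)
      (fun x => R * (1 + γ (x 1) • outer e1 e2)) := by
  rw [sob_iff]
  intro i j
  have hf := isAC_const (-1) 1 (R i 0)
  have hk := (((isAC_id (-1) 1).smul (R i 1)).add (h.smul (R i 0))).add (isAC_const (-1) 1 (c i))
  simp only [form_vec]
  fin_cases j
  · have := affine_WD0 hf hk
    simpa only [(form_entry R _ i).1, Fin.zero_eta] using this
  · have := affine_WD1 hf hk
    simp only [Fin.mk_one, (form_entry R _ i).2]
    convert this using 2
    ring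

lemma sob_congr {u v : V2 → V2} {g : V2 → Mat2} (h : IsSobolev11On Rect u g)
    (huv : ∀ᵐ x ∂muR, u x = v x) : IsSobolev11On Rect v g := by
  rw [sob_iff] at h ⊢
  intro i j
  refine (h i j).congr ?_
  filter_upwards [huv] with x hx
  rw [hx]

lemma isAC_prim {γ : ℝ → ℝ} (h : IntegrableOn γ (Ioo (-1) 1)) :
    IsAC (fun t => ∫ r in (0:ℝ)..t, γ r) γ (-1) 1 := by
  refine ⟨h, fun s hs t ht => ?_⟩
  have hii : ∀ s ∈ Ioo (-1:ℝ) 1, IntervalIntegrable γ volume 0 s := by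
    intro s hs
    have h1 : IntervalIntegrable γ volume (-1) 1 := by
      rw [intervalIntegrable_iff_integrableOn_Ioo_of_le (by norm_num)]; exact h
    refine h1.mono_set ?_
    rw [uIcc_of_le (by norm_num : (-1:ℝ) ≤ 1)]
    exact uIcc_subset_Icc (by norm_num) (Ioo_subset_Icc_self hs)
  exact intervalIntegral.integral_interval_sub_left (hii t ht) (hii s hs)

lemma form_of_sob {u : V2 → V2} {R : Mat2} {γ : ℝ → ℝ} (hγ : IntegrableOn γ (Ioo (-1) 1))
    (h : IsSobolev11On Rect u (fun x => R * (1 + γ (x 1) • outer e1 e2))) :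
    ∃ θ, IsAC θ γ (-1) 1 ∧ ∃ c : V2, ∀ᵐ x ∂muR,
      u x = R.mulVec x + θ (x 1) • R.mulVec e1 + c := by
  refine ⟨_, isAC_prim hγ, ?_⟩
  have hv := sob_of_form R (isAC_prim hγ) 0
  rw [sob_iff] at h hv
  have hc : ∀ i, ∃ c, ∀ᵐ x ∂muR, u x i + (-1) *
      (R.mulVec x + (∫ r in (0:ℝ)..(x 1), γ r) • R.mulVec e1 + 0) i = c := by
    intro i
    refine const_2d ?_ ?_
    · have := (h i 0).add ((hv i 0).smul (-1))
      simpa using this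
    · have := (h i 1).add ((hv i 1).smul (-1))
      simpa using this
  choose c hc using hc
  refine ⟨c, ?_⟩
  filter_upwards [hc 0, hc 1] with x h0 h1
  funext i
  fin_cases i
  · simp at h0 ⊢; linarith
  · simp at h1 ⊢; linarith

lemma IsAC.bv {a b : ℝ} (hab : a < b) {f f' : ℝ → ℝ} (h : IsAC f f' a b) :
    BoundedVariationOn f (Ioo a b) := by
  obtain ⟨F, hF, hFf, -⟩ := h.ext hab
  have h1 := hF.boundedVariationOn
  rw [uIcc_of_le hab.le] at h1
  have h2 := h1.mono Ioo_subset_Icc_self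
  unfold BoundedVariationOn at h2 ⊢
  rwa [eVariationOn.eq_of_eqOn (fun t ht => (hFf t ht).symm)]

lemma form_det {R : Mat2} (hR : R ∈ SO2) (c : ℝ) : (R * (1 + c • outer e1 e2)).det = 1 := by
  rw [Matrix.det_mul, hR.2, Matrix.det_fin_two]
  simp [outer, e1, e2]

lemma memA_of_form {u : V2 → V2} {R : Mat2} (hR : R ∈ SO2) {θ γ : ℝ → ℝ} (h : IsAC θ γ (-1) 1)
    {c : V2} (hu : ∀ᵐ x ∂muR, u x = R.mulVec x + θ (x 1) • R.mulVec e1 + c) :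
    memAOn Rect (-1) 1 u := by
  have hs : IsSobolev11On Rect u _ := sob_congr (sob_of_form R h c) (by
    filter_upwards [hu] with x hx using hx.symm)
  refine ⟨_, 0, fun _ => 0, ⟨hs.int_u, hs.int_gu, by simp, by simp, ?_, ?_, by simp, ?_⟩,
    ⟨fun _ => R, fun t => θ t • R.mulVec e1 + c, fun _ _ => hR, ?_, ?_, ?_⟩, ?_⟩
  · exact Measure.MutuallySingular.zero_left
  · intro i j; exact aemeasurable_const
  · intro φ h1 h2 h3 i j
    rw [hs.ibp φ h1 h2 h3 i j]; simp
  · unfold BVm BoundedVariationOn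
    rw [eVariationOn.constant_on]
    · simp
    · rintro _ ⟨s, _, rfl⟩ _ ⟨t, _, rfl⟩; rfl
  · unfold BVv
    have hL : LipschitzWith ‖vToE (R.mulVec e1)‖₊ (fun r : ℝ => vToE (r • R.mulVec e1 + c)) := by
      refine LipschitzWith.of_dist_le_mul fun p q => ?_
      rw [dist_eq_norm]
      have : vToE (p • R.mulVec e1 + c) - vToE (q • R.mulVec e1 + c)
          = (p - q) • vToE (R.mulVec e1) := by
        generalize R.mulVec e1 = w
        simp only [vToE, ← map_sub, ← map_smul]
        congr 1
        module
      rw [this, norm_smul, mul_comm]; rfl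
    exact hL.comp_boundedVariationOn (h.bv (by norm_num))
  · filter_upwards [hu] with x hx
    rw [hx, add_assoc]
  · exact Eventually.of_forall fun x => form_det hR _

/-- pairing of `x₀ f(x₁) + q(x₁)` with a tensor test function -/
lemma weak_pair {f q : ℝ → ℝ} {g : V2 → ℝ} (hf : IntegrableOn f (Ioo (-1) 1))
    (hq : IntegrableOn q (Ioo (-1) 1))
    (h : WD 1 (fun x => x 0 * f (x 1) + q (x 1)) g) {α : ℝ → ℝ} (hα : Tst_s15 0 1 α) {β : ℝ → ℝ}
    (hβ : Tst_s15 (-1) 1 β) :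
    ∫ t in Ioo (-1:ℝ) 1, ((∫ s in Ioo (0:ℝ) 1, s * α s) * f t + (∫ s in Ioo (0:ℝ) 1, α s) * q t)
        * deriv β t = - ∫ t in Ioo (-1:ℝ) 1, β t * (∫ s, g ![s, t] * α s ∂muX) := by
  have h1 := h.ibp _ (tensor_tst hα hβ)
  rw [rect_integral, rect_integral] at h1
  simp only [tensor_pd1 hα hβ] at h1
  rw [pair_eq0 h.intf hα hβ.deriv.continuous hβ.deriv.exists_bound] at h1
  have h2 : ∀ z : ℝ × ℝ, (α ((![z.1, z.2] : V2) 0) * β ((![z.1, z.2] : V2) 1)) * g ![z.1, z.2]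
      = g ![z.1, z.2] * (α z.1 * β z.2) := fun z => by simp; ring
  simp only [h2] at h1
  rw [pair_eq0 h.intg hα hβ.continuous hβ.exists_bound] at h1
  have h3 : ∀ t, ∫ s, ((![s, t] : V2) 0 * f ((![s, t] : V2) 1) + q ((![s, t] : V2) 1)) * α s ∂muX
      = (∫ s in Ioo (0:ℝ) 1, s * α s) * f t + (∫ s in Ioo (0:ℝ) 1, α s) * q t := by
    intro t
    simp only [Matrix.cons_val_zero, Matrix.cons_val_one]
    have e : ∀ s, (s * f t + q t) * α s = (s * α s) * f t + α s * q t := fun s => by ring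
    simp only [e]
    rw [integral_add, integral_mul_const, integral_mul_const]
    · exact (hα.mul_int ((isAC_id 0 1).integrable (by norm_num))).mul_const _
    · exact hα.integrable.integrableOn.mul_const _
  simp only [h3] at h1
  rw [h1]
  congr 1
  refine integral_congr_ae (Eventually.of_forall fun t => ?_)
  simp only; ring

lemma G_int {g : V2 → ℝ} (hg : IntegrableOn g Rect) {α : ℝ → ℝ} (hα : Tst_s15 0 1 α) :
    IntegrableOn (fun t => ∫ s, g ![s, t] * α s ∂muX) (Ioo (-1) 1) := by
  exact (pair0_int hg hα).integral_prod_right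

lemma extract_AC {f q : ℝ → ℝ} {g : V2 → ℝ} (hf : IntegrableOn f (Ioo (-1) 1))
    (hq : IntegrableOn q (Ioo (-1) 1))
    (h : WD 1 (fun x => x 0 * f (x 1) + q (x 1)) g) :
    ∃ F F' K K', IsAC F F' (-1) 1 ∧ IsAC K K' (-1) 1 ∧ (∀ᵐ t ∂muY, f t = F t) ∧
      ∀ᵐ t ∂muY, q t = K t := by
  obtain ⟨α, hα, hα1⟩ := exists_tst (a := 0) (b := 1) (by norm_num)
  have hd := hα.deriv
  have hA : ∫ s in Ioo (0:ℝ) 1, deriv α s = 0 := by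
    have := (isAC_const 0 1 1).ibp (by norm_num) hα
    simpa using this
  have hB : ∫ s in Ioo (0:ℝ) 1, s * deriv α s = -1 := by
    have := (isAC_id 0 1).ibp (by norm_num) hα
    simpa [hα1] using this
  set m := ∫ s in Ioo (0:ℝ) 1, s * α s with hm
  set G1 := fun t => ∫ s, g ![s, t] * deriv α s ∂muX with hG1
  set G0 := fun t => ∫ s, g ![s, t] * α s ∂muX with hG0
  have i1 : IntegrableOn G1 (Ioo (-1) 1) := G_int h.intg hd
  have i0 : IntegrableOn G0 (Ioo (-1) 1) := G_int h.intg hα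
  have w1 : ∀ β, Tst_s15 (-1) 1 β → ∫ t in Ioo (-1:ℝ) 1, f t * deriv β t
      = - ∫ t in Ioo (-1:ℝ) 1, β t * (-1 * G1 t) := by
    intro β hβ
    have h1 := weak_pair hf hq h hd hβ
    rw [hA, hB] at h1
    have e1 : ∀ t, (-1 * f t + 0 * q t) * deriv β t = (-1) * (f t * deriv β t) :=
      fun t => by ring
    have e2 : ∀ t, β t * (-1 * G1 t) = (-1) * (β t * G1 t) := fun t => by ring
    simp only [e1, e2, integral_const_mul] at h1 ⊢
    linarith
  obtain ⟨F, hF, hfF⟩ := isAC_of_weak (by norm_num) hf (i1.const_mul (-1)) w1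
  have w0 : ∀ β, Tst_s15 (-1) 1 β → ∫ t in Ioo (-1:ℝ) 1, q t * deriv β t
      = - ∫ t in Ioo (-1:ℝ) 1, β t * (G0 t + m * G1 t) := by
    intro β hβ
    have h1 := weak_pair hf hq h hα hβ
    have h2 := w1 β hβ
    rw [hα1, ← hm] at h1
    have e1 : ∀ t, (m * f t + 1 * q t) * deriv β t = m * (f t * deriv β t) + q t * deriv β t :=
      fun t => by ring
    have e2 : ∀ t, β t * (-1 * G1 t) = (-1) * (G1 t * β t) := fun t => by ring
    have e3 : ∀ t, β t * (G0 t + m * G1 t) = G0 t * β t + m * (G1 t * β t) := fun t => by ring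
    have e4 : ∀ t, β t * (∫ s, g ![s, t] * α s ∂muX) = G0 t * β t :=
      fun t => by rw [hG0]; ring
    simp only [e2, integral_const_mul] at h2
    simp only [e3, e4, e1] at h1 ⊢
    rw [integral_add ((hβ.deriv.mul_int hf).const_mul m) (hβ.deriv.mul_int hq),
      integral_const_mul] at h1
    rw [integral_add (hβ.mul_int i0) ((hβ.mul_int i1).const_mul m), integral_const_mul]
    rw [h2] at h1
    linarith
  obtain ⟨K, hK, hqK⟩ := isAC_of_weak (by norm_num) hq (i0.add (i1.const_mul m)) w0
  exact ⟨F, _, K, _, hF, hK, hfF, hqK⟩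

/-- a.e. in `x 1` lifts to a.e. in the rectangle -/
lemma lift_ae {P : ℝ → Prop} (h : ∀ᵐ t ∂muY, P t) : ∀ᵐ x ∂muR, P (x 1) := by
  rw [rect_ae]
  have := Measure.quasiMeasurePreserving_snd (μ := muX) (ν := muY) |>.ae h
  simpa using this

lemma bv_meas {f : ℝ → ℝ} (h : BoundedVariationOn f (Ioo (-1) 1)) :
    IntegrableOn f (Ioo (-1) 1) := by
  obtain ⟨p, q, hp, hq, e⟩ := h.locallyBoundedVariationOn.exists_monotoneOn_sub_monotoneOn
  have hm : AEMeasurable f muY := by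
    rw [e]
    exact (aemeasurable_restrict_of_monotoneOn measurableSet_Ioo hp).sub
      (aemeasurable_restrict_of_monotoneOn measurableSet_Ioo hq)
  refine Integrable.of_bound hm.aestronglyMeasurable
    (‖f 0‖ + (eVariationOn f (Ioo (-1) 1)).toReal) ?_
  refine (ae_restrict_iff' measurableSet_Ioo).2 (Eventually.of_forall fun t ht => ?_)
  have h1 := h.dist_le ht (by norm_num : (0:ℝ) ∈ Ioo (-1:ℝ) 1)
  rw [dist_eq_norm] at h1
  calc ‖f t‖ = ‖(f t - f 0) + f 0‖ := by simp
    _ ≤ ‖f t - f 0‖ + ‖f 0‖ := norm_add_le _ _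
    _ ≤ _ := by linarith

lemma coord_lip {ι : Type*} [Fintype ι] (i : ι) :
    LipschitzWith 1 (fun v : EuclideanSpace ℝ ι => v i) := by
  refine LipschitzWith.of_dist_le_mul fun p q => ?_
  simp only [NNReal.coe_one, one_mul, dist_eq_norm]
  exact PiLp.norm_apply_le (p - q) i

lemma bvm_comp {R : ℝ → Mat2} (h : BVm R (Ioo (-1) 1)) (i j : Fin 2) :
    BoundedVariationOn (fun t => R t i j) (Ioo (-1) 1) := by
  unfold BVm at h
  have h1 := LipschitzWith.comp_boundedVariationOn (coord_lip (i, j)) h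
  exact h1

lemma bvv_comp {R : ℝ → V2} (h : BVv R (Ioo (-1) 1)) (i : Fin 2) :
    BoundedVariationOn (fun t => R t i) (Ioo (-1) 1) := by
  unfold BVv at h
  have h1 := LipschitzWith.comp_boundedVariationOn (coord_lip i) h
  exact h1

/-- the approximate differential agrees with the weak gradient -/
lemma grad_eq {u : V2 → V2} {g gu gs : V2 → Mat2} {σ : Measure V2}
    (h : IsSobolev11On Rect u g) (h2 : HasBVDerivOn Rect u gu σ gs) (i j : Fin 2) :
    ∀ᵐ x ∂muR, gu x i j = g x i j := by
  have : IsFiniteMeasure σ := ⟨lt_top_iff_ne_top.2 h2.fin⟩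
  have hk : Integrable (fun x => gs x i j) σ := by
    refine Integrable.of_bound (h2.meas_gs i j).aestronglyMeasurable 1 ?_
    filter_upwards [h2.unit] with x hx
    unfold mnorm at hx
    rw [Real.sqrt_eq_one] at hx
    simp only [Fin.sum_univ_two] at hx
    rw [Real.norm_eq_abs]
    apply abs_le_one_iff_mul_self_le_one.2
    have := sq_nonneg (gs x 0 0)
    have := sq_nonneg (gs x 0 1)
    have := sq_nonneg (gs x 1 0)
    have := sq_nonneg (gs x 1 1)
    fin_cases i <;> fin_cases j <;> simp <;> nlinarith
  have := sing_unique (h := fun x => g x i j - gu x i j) (k := fun x => gs x i j) (σ := σ)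
    ((h.int_gu i j).sub (h2.int_gu i j)) hk h2.perp (by
      intro φ hφ
      have a1 := h.ibp φ hφ.smooth hφ.cpt hφ.supp i j
      have a2 := h2.ibp φ hφ.smooth hφ.cpt hφ.supp i j
      simp only [mul_sub]
      rw [integral_sub (hφ.mul_int' (h.int_gu i j)) (hφ.mul_int' (h2.int_gu i j))]
      linarith)
  filter_upwards [this] with x hx
  linarith

lemma slice_ae {P : V2 → Prop} (h : ∀ᵐ x ∂muR, P x) : ∀ᵐ t ∂muY, ∀ᵐ s ∂muX, P ![s, t] := by
  rw [rect_ae, ← Measure.prod_swap] at h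
  have h2 := ae_of_ae_map measurable_swap.aemeasurable h
  exact Measure.ae_ae_of_ae_prod h2

lemma affine_const {a b c : ℝ} (h : ∀ᵐ s ∂muX, a * s + b = c) : a = 0 ∧ b = c := by
  have h1 : EqOn (fun s : ℝ => a * s + b) (fun _ => c) (Ioo 0 1) :=
    Measure.eqOn_Ioo_of_ae_eq volume h (by fun_prop) (by fun_prop)
  have h2 := h1 (show (1/2 : ℝ) ∈ Ioo (0:ℝ) 1 by norm_num)
  have h3 := h1 (show (1/4 : ℝ) ∈ Ioo (0:ℝ) 1 by norm_num)
  simp only at h2 h3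
  constructor <;> linarith

lemma IsAC.congr_der {a b : ℝ} {f f' g : ℝ → ℝ} (h : IsAC f f' a b)
    (hg : ∀ᵐ t ∂(volume.restrict (Ioo a b)), f' t = g t) : IsAC f g a b := by
  refine ⟨h.int.congr hg, fun s hs t ht => ?_⟩
  rw [h.eq s hs t ht]
  refine intervalIntegral.integral_congr_ae ?_
  rw [ae_restrict_iff' measurableSet_Ioo] at hg
  filter_upwards [hg] with r hr hr2
  refine hr ?_
  have : uIcc s t ⊆ Ioo a b := ordConnected_Ioo.uIcc_subset hs ht
  exact this (uIoc_subset_uIcc hr2)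

lemma unit_der {F0 F0' F1 F1' : ℝ → ℝ} (h0 : IsAC F0 F0' (-1) 1) (h1 : IsAC F1 F1' (-1) 1)
    (hu : ∀ᵐ t ∂muY, F0 t ^ 2 + F1 t ^ 2 = 1) :
    (∀ t ∈ Ioo (-1:ℝ) 1, F0 t ^ 2 + F1 t ^ 2 = 1) ∧
    ∀ᵐ t ∂muY, F0 t * F0' t + F1 t * F1' t = 0 := by
  obtain ⟨A, hA, hAF, hAd⟩ := h0.ext (by norm_num)
  obtain ⟨B, hB, hBF, hBd⟩ := h1.ext (by norm_num)
  have cA : ContinuousOn A (Ioo (-1) 1) := by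
    have := hA.continuousOn
    rw [uIcc_of_le (by norm_num)] at this
    exact this.mono Ioo_subset_Icc_self
  have cB : ContinuousOn B (Ioo (-1) 1) := by
    have := hB.continuousOn
    rw [uIcc_of_le (by norm_num)] at this
    exact this.mono Ioo_subset_Icc_self
  have hE : EqOn (fun t => A t ^ 2 + B t ^ 2) (fun _ => 1) (Ioo (-1) 1) := by
    refine Measure.eqOn_Ioo_of_ae_eq volume ?_ (by fun_prop) (by fun_prop)
    filter_upwards [hu, ae_restrict_mem measurableSet_Ioo] with t ht hm
    simp only [hAF t hm, hBF t hm, ht]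
  refine ⟨fun t ht => by have := hE ht; simp only at this; rw [← hAF t ht, ← hBF t ht, this], ?_⟩
  rw [ae_restrict_iff' measurableSet_Ioo]
  filter_upwards [hAd, hBd] with t ha hb ht
  have d1 := ((ha ht).pow 2).add ((hb ht).pow 2)
  have d2 : HasDerivAt (A ^ 2 + B ^ 2) 0 t := by
    refine (hasDerivAt_const t (1:ℝ)).congr_of_eventuallyEq ?_
    filter_upwards [isOpen_Ioo.mem_nhds ht] with r hr
    exact hE hr
  have := d1.unique d2
  rw [hAF t ht, hBF t ht] at this
  simp at this
  linarith

lemma col_unit {R : Mat2} (h : R ∈ SO2) : R 0 0 ^ 2 + R 1 0 ^ 2 = 1 ∧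
    R 0 1 = - R 1 0 ∧ R 1 1 = R 0 0 := by
  obtain ⟨h1, h2⟩ := h
  have a := congrFun (congrFun h1 0) 0
  have b := congrFun (congrFun h1 0) 1
  have c := congrFun (congrFun h1 1) 1
  simp [Matrix.mul_apply, Fin.sum_univ_two] at a b c
  rw [Matrix.det_fin_two] at h2
  have e1 : R 0 1 = - R 1 0 := by
    linear_combination - R 0 1 * c - R 1 0 * h2 + R 1 1 * b
  have e2 : R 1 1 = R 0 0 := by
    linear_combination - R 1 0 * b - R 1 1 * h2 + R 0 0 * c
  refine ⟨?_, e1, e2⟩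
  rw [e2] at c
  linarith

lemma form_of_memA {u : V2 → V2} (hA : memAOn Rect (-1) 1 u) {g : V2 → Mat2}
    (hg : IsSobolev11On Rect u g) :
    ∃ R ∈ SO2, ∃ θ γ : ℝ → ℝ, IsAC θ γ (-1) 1 ∧ ∃ c : V2,
      ∀ᵐ x ∂muR, u x = R.mulVec x + θ (x 1) • R.mulVec e1 + c := by
  obtain ⟨gu, σ, gs, hbv, ⟨R, ψ, hR, hRbv, hψ, hu⟩, hdet⟩ := hA
  have hgu := grad_eq hg hbv
  rw [sob_iff] at hg
  -- components
  have hfint : ∀ i, IntegrableOn (fun t => R t i 0) (Ioo (-1) 1) :=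
    fun i => bv_meas (bvm_comp hRbv i 0)
  have hqint : ∀ i, IntegrableOn (fun t => R t i 1 * t + ψ t i) (Ioo (-1) 1) := by
    intro i
    refine Integrable.add ?_ (bv_meas (bvv_comp hψ i))
    refine Integrable.mul_bdd (c := 1) (bv_meas (bvm_comp hRbv i 1))
      measurable_id.aestronglyMeasurable ?_
    refine (ae_restrict_iff' measurableSet_Ioo).2 (Eventually.of_forall fun t ht => ?_)
    rw [Real.norm_eq_abs]
    exact abs_le.2 ⟨ht.1.le, ht.2.le⟩
  have hui : ∀ i, ∀ᵐ x ∂muR, u x i = x 0 * R (x 1) i 0 + (R (x 1) i 1 * x 1 + ψ (x 1) i) := by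
    intro i
    filter_upwards [hu] with x hx
    rw [hx]
    simp only [Pi.add_apply, Matrix.mulVec, dotProduct, Fin.sum_univ_two]
    ring
  have hex : ∀ i, ∃ F F' K K', IsAC F F' (-1) 1 ∧ IsAC K K' (-1) 1 ∧
      (∀ᵐ t ∂muY, R t i 0 = F t) ∧ ∀ᵐ t ∂muY, R t i 1 * t + ψ t i = K t :=
    fun i => extract_AC (hfint i) (hqint i) ((hg i 1).congr (hui i))
  choose F F' K K' hF hK hfF hqK using hex
  have hu2 : ∀ i, ∀ᵐ x ∂muR, x 0 * F i (x 1) + K i (x 1) = u x i := by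
    intro i
    filter_upwards [hui i, lift_ae (hfF i), lift_ae (hqK i)] with x h1 h2 h3
    rw [h1, h2, h3]
  have hg0 : ∀ i, ∀ᵐ x ∂muR, g x i 0 = F i (x 1) :=
    fun i => (hg i 0).unique ((affine_WD0 (hF i) (hK i)).congr (hu2 i))
  have hg1 : ∀ i, ∀ᵐ x ∂muR, g x i 1 = x 0 * F' i (x 1) + K' i (x 1) :=
    fun i => (hg i 1).unique ((affine_WD1 (hF i) (hK i)).congr (hu2 i))
  have hd : ∀ᵐ x ∂muR, (F 0 (x 1) * F' 1 (x 1) - F 1 (x 1) * F' 0 (x 1)) * x 0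
      + (F 0 (x 1) * K' 1 (x 1) - F 1 (x 1) * K' 0 (x 1)) = 1 := by
    filter_upwards [hdet, hgu 0 0, hgu 0 1, hgu 1 0, hgu 1 1, hg0 0, hg0 1, hg1 0, hg1 1]
      with x h a1 a2 a3 a4 b1 b2 b3 b4
    rw [Matrix.det_fin_two, a1, a2, a3, a4, b1, b2, b3, b4] at h
    rw [← h]; ring
  have hd2 : ∀ᵐ t ∂muY, F 0 t * F' 1 t - F 1 t * F' 0 t = 0 ∧
      F 0 t * K' 1 t - F 1 t * K' 0 t = 1 := by
    filter_upwards [slice_ae hd] with t ht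
    exact affine_const ht
  have hunit : ∀ᵐ t ∂muY, F 0 t ^ 2 + F 1 t ^ 2 = 1 := by
    filter_upwards [hfF 0, hfF 1, ae_restrict_mem measurableSet_Ioo] with t h0 h1 ht
    rw [← h0, ← h1]
    exact (col_unit (hR t ht)).1
  obtain ⟨hU, hder⟩ := unit_der (hF 0) (hF 1) hunit
  have hF0 : ∀ i, ∀ᵐ t ∂muY, F' i t = 0 := by
    intro i
    filter_upwards [hunit, hder, hd2] with t a b c
    obtain ⟨c, -⟩ := c
    fin_cases i
    · show F' 0 t = 0
      linear_combination - F' 0 t * a + F 0 t * b - F 1 t * c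
    · show F' 1 t = 0
      linear_combination - F' 1 t * a + F 1 t * b + F 0 t * c
  have z0 : (0:ℝ) ∈ Ioo (-1:ℝ) 1 := by norm_num
  have hconst : ∀ i, ∀ t ∈ Ioo (-1:ℝ) 1, F i t = F i 0 := by
    intro i t ht
    have := ((hF i).congr_der (hF0 i)).eq 0 z0 t ht
    simp at this
    linarith
  have hr := hU 0 z0
  set r0 := F 0 0 with hr0
  set r1 := F 1 0 with hr1
  have hL : IsAC (fun t => -r1 * K 0 t + r0 * K 1 t) (fun _ => 1) (-1) 1 := by
    refine (((hK 0).smul (-r1)).add ((hK 1).smul r0)).congr_der ?_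
    filter_upwards [hd2, ae_restrict_mem measurableSet_Ioo] with t h ht
    obtain ⟨-, h⟩ := h
    rw [hconst 0 t ht, hconst 1 t ht, ← hr0, ← hr1] at h
    linarith
  set p := -r1 * K 0 0 + r0 * K 1 0 with hp
  refine ⟨!![r0, -r1; r1, r0], ⟨?_, ?_⟩, _, _, ((hK 0).smul r0).add ((hK 1).smul r1),
    ![-r1 * p, r0 * p], ?_⟩
  · ext i j
    fin_cases i <;> fin_cases j <;> simp [Matrix.mul_apply, Fin.sum_univ_two] <;> linarith
  · simp [Matrix.det_fin_two]; linarith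
  filter_upwards [hu2 0, hu2 1, ae_restrict_mem rect_open.measurableSet] with x h0 h1 hx
  have hL1 := hL.eq 0 z0 (x 1) hx.2
  simp at hL1
  rw [hconst 0 _ hx.2] at h0
  rw [hconst 1 _ hx.2] at h1
  have hL2 : -r1 * K 0 (x 1) + r0 * K 1 (x 1) = x 1 + p := by rw [hp]; linarith
  funext i
  rw [form_vec]
  fin_cases i
  · simp
    rw [← h0, ← hr0]
    linear_combination - K 0 (x 1) * hr - r1 * hL2
  · simp
    rw [← h1, ← hr1]
    linear_combination - K 1 (x 1) * hr + r0 * hL2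

/-- Remark 4.1(a): characterization of `A ∩ W^{1,1}(Ω;ℝ²)` on
`Ω = (0,1) × (−1,1)`: `A ∩ W^{1,1}` consists of the maps `u(x) = Rx + θ(x₂)Re₁ + c` with a
constant `R ∈ SO(2)`, `θ ∈ W^{1,1}(−1,1)`, `c ∈ ℝ²`, and equivalently of the `W^{1,1}` maps
with `∇u(x) = R(I + γ(x₂)e₁⊗e₂)`, `R ∈ SO(2)`, `γ ∈ L¹(−1,1)`. -/
theorem charA_W11_Rect :
    ∀ u : V2 → V2,
      ((memAOn Rect (-1) 1 u ∧ ∃ g : V2 → Mat2, IsSobolev11On Rect u g) ↔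
        ((∃ g : V2 → Mat2, IsSobolev11On Rect u g) ∧
          ∃ R ∈ SO2, ∃ θ : ℝ → ℝ, IsW11On θ (-1) 1 ∧ ∃ c : V2,
            ∀ᵐ x ∂(volume.restrict Rect),
              u x = R.mulVec x + θ (x 1) • R.mulVec e1 + c)) ∧
      ((memAOn Rect (-1) 1 u ∧ ∃ g : V2 → Mat2, IsSobolev11On Rect u g) ↔
        (IntegrableOn u Rect volume ∧
          ∃ R ∈ SO2, ∃ γ : ℝ → ℝ, IntegrableOn γ (Ioo (-1:ℝ) 1) volume ∧
            IsSobolev11On Rect u fun x => R * (1 + γ (x 1) • outer e1 e2))) := by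
  intro u
  refine ⟨⟨?_, ?_⟩, ⟨?_, ?_⟩⟩
  · rintro ⟨hA, g, hg⟩
    obtain ⟨R, hR, θ, γ, h, c, hu⟩ := form_of_memA hA hg
    exact ⟨⟨g, hg⟩, R, hR, θ, ⟨γ, h.int, h.eq⟩, c, hu⟩
  · rintro ⟨hg, R, hR, θ, ⟨γ, h1, h2⟩, c, hu⟩
    exact ⟨memA_of_form hR ⟨h1, h2⟩ hu, hg⟩
  · rintro ⟨hA, g, hg⟩
    obtain ⟨R, hR, θ, γ, h, c, hu⟩ := form_of_memA hA hg
    exact ⟨hg.int_u, R, hR, γ, h.int, sob_congr (sob_of_form R h c) (by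
      filter_upwards [hu] with x hx using hx.symm)⟩
  · rintro ⟨-, R, hR, γ, hγ, hs⟩
    obtain ⟨θ, h, c, hu⟩ := form_of_sob hγ hs
    exact ⟨memA_of_form hR h hu, _, hs⟩
end
end
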